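/- arXiv:1507.02901 — 7 statements merged into one kernel-verified Lean document; each statement's English description precedes it below -/
import Mathlib

section
/- Let H and 𝔏 be nonzero complex Hilbert spaces, let R be an injective quasinormal bounded operator on H, and let A be an injective positive bounded operator on 𝔏. Then every complex number λ with |λ| > m_{|R|}/‖A‖ belongs to Λ_int(R, A⊗S). -/
open ContinuousLinearMap

noncomputable section

/-- The modulus `|T| = (T*T)^(1/2)` of a bounded operator on a complex Hilbert space. -/
def modulus {H : Type*} [NormedAddCommGroup H] [InnerProductSpace ℂ H] [CompleteSpace H]
    (T : H →L[ℂ] H) : H →L[ℂ] H :=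
  CFC.sqrt (adjoint T ∘L T)

/-- A bounded operator is quasinormal if it commutes with its modulus. -/
def IsQuasinormal {H : Type*} [NormedAddCommGroup H] [InnerProductSpace ℂ H] [CompleteSpace H]
    (T : H →L[ℂ] H) : Prop :=
  T ∘L modulus T = modulus T ∘L T

/-- `m_T = inf {⟨Tx,x⟩ : ‖x‖ = 1}` (real part of the inner product). -/
def mval {H : Type*} [NormedAddCommGroup H] [InnerProductSpace ℂ H]
    (T : H →L[ℂ] H) : ℝ :=
  sInf {r : ℝ | ∃ x : H, ‖x‖ = 1 ∧ r = T.reApplyInnerSelf x}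

/-- The set of intertwining values `Λ_int(R,M)`. -/
def intertwiningValues {H K : Type*} [NormedAddCommGroup H] [InnerProductSpace ℂ H]
    [NormedAddCommGroup K] [InnerProductSpace ℂ K]
    (R : H →L[ℂ] H) (M : K →L[ℂ] K) : Set ℂ :=
  {l : ℂ | ∃ X : K →L[ℂ] H, X ≠ 0 ∧ R ∘L X = l • (X ∘L M)}

/-- The set of extended eigenvalues `σ_ext(T)`. -/
def extSpectrum {H : Type*} [NormedAddCommGroup H] [InnerProductSpace ℂ H]
    (T : H →L[ℂ] H) : Set ℂ :=
  {l : ℂ | ∃ X : H →L[ℂ] H, X ≠ 0 ∧ T ∘L X = l • (X ∘L T)}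

/-- The set `𝒜_r(R,A)` of operators `L` with `‖Rⁿ(Lx)‖ ≤ c·rⁿ·‖Aⁿx‖` for all `n, x`. -/
def calA {H 𝔏 : Type*} [NormedAddCommGroup H] [InnerProductSpace ℂ H]
    [NormedAddCommGroup 𝔏] [InnerProductSpace ℂ 𝔏]
    (r : ℝ) (R : H →L[ℂ] H) (A : 𝔏 →L[ℂ] 𝔏) : Set (𝔏 →L[ℂ] H) :=
  {L : 𝔏 →L[ℂ] H | ∃ c : ℝ, 0 ≤ c ∧
    ∀ (n : ℕ) (x : 𝔏), ‖(R ^ n) (L x)‖ ≤ c * r ^ n * ‖(A ^ n) x‖}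

/-- An operator is pure if it has no nonzero reducing subspace on which it is normal. -/
def IsPure {H : Type*} [NormedAddCommGroup H] [InnerProductSpace ℂ H] [CompleteSpace H]
    (T : H →L[ℂ] H) : Prop :=
  ∀ M : Submodule ℂ H, IsClosed (M : Set H) → (∀ x ∈ M, T x ∈ M) →
    (∀ x ∈ M, adjoint T x ∈ M) →
    (∀ x ∈ M, T (adjoint T x) = adjoint T (T x)) → M = ⊥

universe u

/-- An operator is subnormal if it has a normal extension on a larger Hilbert space. -/
def IsSubnormal {F : Type*} [NormedAddCommGroup F] [InnerProductSpace ℂ F] [CompleteSpace F]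
    (T : F →L[ℂ] F) : Prop :=
  ∃ (K : Type u) (_ : NormedAddCommGroup K) (_ : InnerProductSpace ℂ K) (_ : CompleteSpace K)
    (j : F →ₗᵢ[ℂ] K) (M : K →L[ℂ] K),
      adjoint M ∘L M = M ∘L adjoint M ∧ ∀ x : F, M (j x) = j (T x)

end

lemma aux_low {H : Type*} [NormedAddCommGroup H] [InnerProductSpace ℂ H] [CompleteSpace H]
    [Nontrivial H] (P : H →L[ℂ] H) (hP : 0 ≤ P) (a : ℝ) (ha : mval P < a) :
    ∃ v : H, v ≠ 0 ∧ ∃ c : ℝ, 0 ≤ c ∧ ∀ n : ℕ, ‖(P ^ n) v‖ ≤ c * a ^ n := by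
  have hsa : IsSelfAdjoint P := IsSelfAdjoint.of_nonneg hP
  have hspec : ∀ t ∈ spectrum ℝ P, 0 ≤ t := fun t ht => spectrum_nonneg_of_nonneg hP ht
  obtain ⟨t, ht, hta⟩ : ∃ t ∈ spectrum ℝ P, t < a := by
    by_contra! hcon
    have hle : algebraMap ℝ (H →L[ℂ] H) a ≤ P :=
      (algebraMap_le_iff_le_spectrum hsa).2 hcon
    have hpos := (ContinuousLinearMap.le_def _ _).1 hle
    refine absurd ha (not_lt.2 ?_)
    refine le_csInf ?_ ?_
    · obtain ⟨x, hx⟩ := exists_norm_eq H (zero_le_one' ℝ)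
      exact ⟨_, x, hx, rfl⟩
    · rintro r ⟨x, hx, rfl⟩
      have h := hpos.re_inner_nonneg_left x
      have h2 : (algebraMap ℝ (H →L[ℂ] H) a) x = (a : ℂ) • x := by
        rw [Algebra.algebraMap_eq_smul_one]; simp
      rw [_root_.sub_apply, inner_sub_left, map_sub, h2, inner_smul_left,
        inner_self_eq_norm_sq_to_K, hx] at h
      simp at h
      simpa [ContinuousLinearMap.reApplyInnerSelf] using h
  have ha0 : 0 < a := (hspec t ht).trans_lt hta
  set f : ℝ → ℝ := fun s => max 0 (a - s) with hf
  have hfc : Continuous f := by fun_prop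
  have hne : cfc f P ≠ 0 := by
    intro h0
    have := norm_apply_le_norm_cfc f P ht hfc.continuousOn hsa
    rw [h0, norm_zero] at this
    have h1 : f t = 0 := by simpa using this
    have h2 : a - t ≤ f t := le_max_right _ _
    linarith
  obtain ⟨w, hw⟩ : ∃ w, cfc f P w ≠ 0 := by
    by_contra! h
    exact hne (ContinuousLinearMap.ext h)
  refine ⟨cfc f P w, hw, a * ‖w‖, by positivity, fun n => ?_⟩
  have h1 : P ^ n * cfc f P = cfc (fun s => s ^ n * f s) P := by
    rw [cfc_mul (fun s => s ^ n) f P (by fun_prop) hfc.continuousOn, cfc_pow_id P n]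
  have h2 : ‖P ^ n * cfc f P‖ ≤ a ^ n * a := by
    rw [h1]
    refine norm_cfc_le (by positivity) fun s hs => ?_
    have hs0 := hspec s hs
    have hf0 : 0 ≤ f s := le_max_left _ _
    rw [Real.norm_of_nonneg (by positivity)]
    rcases le_total s a with h | h
    · have : f s ≤ a := max_le ha0.le (by linarith)
      gcongr
    · have : f s = 0 := max_eq_left (by linarith)
      rw [this, mul_zero]; positivity
  calc ‖(P ^ n) (cfc f P w)‖ = ‖(P ^ n * cfc f P) w‖ := rfl
    _ ≤ ‖P ^ n * cfc f P‖ * ‖w‖ := ContinuousLinearMap.le_opNorm _ _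
    _ ≤ a ^ n * a * ‖w‖ := by gcongr
    _ = _ := by ring

lemma aux_high {H : Type*} [NormedAddCommGroup H] [InnerProductSpace ℂ H] [CompleteSpace H]
    (A : H →L[ℂ] H) (hA : 0 ≤ A) (b : ℝ) (hb : 0 < b) (hbA : b < ‖A‖) :
    ∃ u : ℕ → H, u 0 ≠ 0 ∧ (∀ n, A (u (n + 1)) = u n) ∧
      ∃ c : ℝ, 0 ≤ c ∧ ∀ n : ℕ, ‖u n‖ ≤ c * (b⁻¹) ^ n := by
  have hsa : IsSelfAdjoint A := IsSelfAdjoint.of_nonneg hA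
  have hspec : ∀ t ∈ spectrum ℝ A, 0 ≤ t := fun t ht => spectrum_nonneg_of_nonneg hA ht
  have hspec2 : ∀ t ∈ spectrum ℝ A, t ≤ ‖A‖ := by
    intro t ht
    have := norm_apply_le_norm_cfc (id : ℝ → ℝ) A ht continuousOn_id hsa
    rw [cfc_id ℝ A] at this
    exact (le_abs_self t).trans this
  obtain ⟨t, ht, hta⟩ : ∃ t ∈ spectrum ℝ A, b < t := by
    by_contra! hcon
    refine absurd hbA (not_lt.2 ?_)
    rw [← cfc_id ℝ A]
    refine norm_cfc_le hb.le fun s hs => ?_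
    rw [id, Real.norm_of_nonneg (hspec s hs)]
    exact hcon s hs
  set h : ℕ → ℝ → ℝ := fun n s => max 0 (s - b) * ((max s b)⁻¹) ^ n with hh
  have hmax : ∀ s, 0 < max s b := fun s => hb.trans_le (le_max_right _ _)
  have hc : ∀ n, Continuous (h n) := by
    intro n
    have : Continuous fun s : ℝ => (max s b)⁻¹ :=
      Continuous.inv₀ (by fun_prop) fun s => (hmax s).ne'
    fun_prop
  have hne : cfc (h 0) A ≠ 0 := by
    intro h0
    have := norm_apply_le_norm_cfc (h 0) A ht (hc 0).continuousOn hsa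
    rw [h0, norm_zero] at this
    have h1 : h 0 t = 0 := by simpa using this
    have h2 : t - b ≤ h 0 t := by simp [hh]
    linarith
  obtain ⟨w, hw⟩ : ∃ w, cfc (h 0) A w ≠ 0 := by
    by_contra! h
    exact hne (ContinuousLinearMap.ext h)
  refine ⟨fun n => cfc (h n) A w, hw, fun n => ?_, ‖A‖ * ‖w‖, by positivity, fun n => ?_⟩
  · have h1 : A * cfc (h (n + 1)) A = cfc (h n) A := by
      have e : A * cfc (h (n + 1)) A = cfc (fun s => s * h (n + 1) s) A := by
        rw [cfc_mul (fun s => s) (h (n + 1)) A (by fun_prop) (hc _).continuousOn, cfc_id' ℝ A]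
      rw [e]
      congr 1
      funext s
      rcases le_total s b with hs | hs
      · have : max 0 (s - b) = 0 := max_eq_left (by linarith)
        simp [hh, this]
      · have : max s b = s := max_eq_left hs
        have hs0 : s ≠ 0 := (hb.trans_le hs).ne'
        simp only [hh, this, pow_succ]
        field_simp
    exact congrArg (fun T : H →L[ℂ] H => T w) h1
  · have h2 : ‖cfc (h n) A‖ ≤ ‖A‖ * (b⁻¹) ^ n := by
      refine norm_cfc_le (by positivity) fun s hs => ?_
      have := hmax s
      rw [Real.norm_of_nonneg (by positivity)]
      have h3 : max 0 (s - b) ≤ ‖A‖ := max_le (norm_nonneg _) (by linarith [hspec2 s hs])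
      have h4 : (max s b)⁻¹ ≤ b⁻¹ := inv_anti₀ hb (le_max_right _ _)
      simp only [hh]
      gcongr
    calc ‖cfc (h n) A w‖ ≤ ‖cfc (h n) A‖ * ‖w‖ := ContinuousLinearMap.le_opNorm _ _
      _ ≤ ‖A‖ * (b⁻¹) ^ n * ‖w‖ := by gcongr
      _ = _ := by ring

lemma modulus_nonneg' {H : Type*} [NormedAddCommGroup H] [InnerProductSpace ℂ H]
    [CompleteSpace H] (R : H →L[ℂ] H) : 0 ≤ modulus R := CFC.sqrt_nonneg _

lemma norm_modulus_apply {H : Type*} [NormedAddCommGroup H] [InnerProductSpace ℂ H]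
    [CompleteSpace H] (R : H →L[ℂ] H) (x : H) : ‖modulus R x‖ = ‖R x‖ := by
  have hsq : modulus R * modulus R = adjoint R ∘L R :=
    CFC.sqrt_mul_sqrt_self _
      ((ContinuousLinearMap.nonneg_iff_isPositive _).2 (isPositive_adjoint_comp_self R))
  have hsa : adjoint (modulus R) = modulus R := (IsSelfAdjoint.of_nonneg (modulus_nonneg' R))
  have h1 : inner ℂ (modulus R x) (modulus R x) = inner ℂ (R x) (R x) := by
    rw [← ContinuousLinearMap.adjoint_inner_right R, ← ContinuousLinearMap.comp_apply (adjoint R) R,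
      ← hsq, ← ContinuousLinearMap.adjoint_inner_right (modulus R), hsa]
    rfl
  rw [inner_self_eq_norm_sq_to_K, inner_self_eq_norm_sq_to_K] at h1
  have h2 : ‖modulus R x‖ ^ 2 = ‖R x‖ ^ 2 := by exact_mod_cast h1
  exact (pow_left_inj₀ (norm_nonneg _) (norm_nonneg _) two_ne_zero).1 h2

lemma norm_pow_quasinormal {H : Type*} [NormedAddCommGroup H] [InnerProductSpace ℂ H]
    [CompleteSpace H] (R : H →L[ℂ] H) (hR : IsQuasinormal R) (n : ℕ) :
    ∀ x : H, ‖(R ^ n) x‖ = ‖(modulus R ^ n) x‖ := by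
  have hcomm : Commute R (modulus R) := hR
  induction n with
  | zero => intro x; simp
  | succ n ih =>
    intro x
    have h1 : modulus R ((R ^ n) x) = (R ^ n) (modulus R x) :=
      (congrArg (fun T : H →L[ℂ] H => T x) (hcomm.pow_left n).eq).symm
    calc ‖(R ^ (n + 1)) x‖ = ‖R ((R ^ n) x)‖ := by rw [pow_succ']; rfl
      _ = ‖(R ^ n) (modulus R x)‖ := by rw [← norm_modulus_apply, h1]
      _ = ‖(modulus R ^ (n + 1)) x‖ := by rw [ih, pow_succ]; rfl

lemma exists_terms {H 𝔏 : Type*} [NormedAddCommGroup H] [InnerProductSpace ℂ H]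
    [NormedAddCommGroup 𝔏] [InnerProductSpace ℂ 𝔏]
    (l : ℂ) (u : ℕ → 𝔏) (w : ℕ → H) :
    ∃ Y : ℕ → (lp (fun _ : ℕ => 𝔏) 2 →L[ℂ] H),
      ∀ n x, Y n x = ((l⁻¹) ^ n) • (inner ℂ (u n) (x n) • w n) :=
  ⟨fun n => ((l⁻¹) ^ n) •
    ((innerSL ℂ (u n) ∘L lp.evalCLM ℂ (fun _ : ℕ => 𝔏) 2 n).smulRight (w n)), fun _ _ => rfl⟩

lemma exists_sum {H K : Type*} [NormedAddCommGroup H] [InnerProductSpace ℂ H]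
    [CompleteSpace H] [NormedAddCommGroup K] [InnerProductSpace ℂ K]
    (Y : ℕ → (K →L[ℂ] H)) (C q : ℝ) (hq0 : 0 ≤ q) (hq1 : q < 1)
    (hY : ∀ n, ‖Y n‖ ≤ C * q ^ n) :
    ∃ X : K →L[ℂ] H, ∀ x, HasSum (fun n => Y n x) (X x) := by
  have hg : Summable fun n : ℕ => C * q ^ n := (summable_geometric_of_lt_one hq0 hq1).mul_left C
  have hsum : Summable Y := Summable.of_norm_bounded hg hY
  exact ⟨∑' n, Y n, fun x => (ContinuousLinearMap.apply ℂ H x).hasSum hsum.hasSum⟩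

theorem mem_intertwiningValues_of_gt
    {H 𝔏 : Type*} [NormedAddCommGroup H] [InnerProductSpace ℂ H] [CompleteSpace H] [NormedAddCommGroup 𝔏] [InnerProductSpace ℂ 𝔏] [CompleteSpace 𝔏] [Nontrivial H] [Nontrivial 𝔏]
    (R : H →L[ℂ] H) (hRinj : Function.Injective R) (hRqn : IsQuasinormal R)
    (A : 𝔏 →L[ℂ] 𝔏) (hAinj : Function.Injective A) (hApos : A.IsPositive)
    (AS : lp (fun _ : ℕ => 𝔏) 2 →L[ℂ] lp (fun _ : ℕ => 𝔏) 2)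
    (hAS : ∀ x : lp (fun _ : ℕ => 𝔏) 2,
      (AS x) 0 = 0 ∧ ∀ n : ℕ, (AS x) (n + 1) = A (x n)) :
    ∀ l : ℂ, mval (modulus R) / ‖A‖ < ‖l‖ → l ∈ intertwiningValues R AS := by
  intro l hl
  have hm0 : 0 ≤ mval (modulus R) := by
    refine Real.sInf_nonneg ?_
    rintro r ⟨x, -, rfl⟩
    exact ((ContinuousLinearMap.nonneg_iff_isPositive _).1 (modulus_nonneg' R)).re_inner_nonneg_left x
  have hA0 : 0 < ‖A‖ := by
    rw [norm_pos_iff]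
    rintro rfl
    obtain ⟨x, hx⟩ := exists_ne (0 : 𝔏)
    exact hx (hAinj (by simp))
  have hl0 : 0 < ‖l‖ := (div_nonneg hm0 hA0.le).trans_lt hl
  have hlne : l ≠ 0 := norm_pos_iff.1 hl0
  obtain ⟨b, hb1, hbA⟩ : ∃ b, mval (modulus R) / ‖l‖ < b ∧ b < ‖A‖ := by
    refine exists_between ?_
    rw [div_lt_iff₀ hl0]
    rw [div_lt_iff₀ hA0] at hl
    linarith
  have hb0 : 0 < b := (div_nonneg hm0 hl0.le).trans_lt hb1
  obtain ⟨a, ha1, ha2⟩ := exists_between ((div_lt_iff₀ hl0).1 hb1)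
  have ha0 : 0 < a := hm0.trans_lt ha1
  obtain ⟨v, hv0, c, hc0, hv⟩ := aux_low (modulus R) (modulus_nonneg' R) a ha1
  obtain ⟨u, hu0, hu, d, hd0, hud⟩ :=
    aux_high A ((ContinuousLinearMap.nonneg_iff_isPositive _).2 hApos) b hb0 hbA
  set q : ℝ := a / (b * ‖l‖) with hq
  have hq0 : 0 ≤ q := by positivity
  have hq1 : q < 1 := (div_lt_one (by positivity)).2 ha2
  obtain ⟨Y, hY⟩ := exists_terms l u (fun n => (R ^ n) v)
  have hYn : ∀ n, ‖Y n‖ ≤ (c * d) * q ^ n := by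
    intro n
    refine ContinuousLinearMap.opNorm_le_bound _ (by positivity) fun x => ?_
    rw [hY, norm_smul, norm_smul, norm_pow, norm_inv, norm_pow_quasinormal R hRqn]
    have h1 : ‖inner ℂ (u n) (x n)‖ ≤ (d * (b⁻¹) ^ n) * ‖x‖ :=
      (norm_inner_le_norm _ _).trans
        (mul_le_mul (hud n) (lp.norm_apply_le_norm two_ne_zero x n) (norm_nonneg _) (by positivity))
    calc ‖l‖⁻¹ ^ n * (‖inner ℂ (u n) (x n)‖ * ‖(modulus R ^ n) v‖)
        ≤ ‖l‖⁻¹ ^ n * (((d * (b⁻¹) ^ n) * ‖x‖) * (c * a ^ n)) := by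
          gcongr
          exact hv n
      _ = c * d * q ^ n * ‖x‖ := by
          rw [hq, div_eq_mul_inv, mul_inv, mul_pow, mul_pow]; ring
  obtain ⟨X, hX⟩ := exists_sum Y (c * d) q hq0 hq1 hYn
  refine ⟨X, ?_, ?_⟩
  · intro h0
    have h1 := hX (lp.single 2 0 (u 0))
    have h2 : HasSum (fun n => Y n (lp.single 2 0 (u 0))) (Y 0 (lp.single 2 0 (u 0))) := by
      refine hasSum_single 0 fun n hn => ?_
      rw [hY, lp.single_apply_ne _ _ _ hn]
      simp
    have h3 := h1.unique h2
    rw [h0, hY, lp.single_apply_self] at h3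
    simp at h3
    rcases smul_eq_zero.1 h3.symm with h4 | h4
    · exact hu0 (by simpa using h4)
    · exact hv0 h4
  · ext x
    have h1 : HasSum (fun n => R (Y n x)) (R (X x)) := R.hasSum (hX x)
    have h2 : HasSum (fun n => l • Y n (AS x)) (l • X (AS x)) :=
      (hX (AS x)).const_smul l
    have h3 := (hasSum_nat_add_iff' 1).2 h2
    have e0 : Y 0 (AS x) = 0 := by rw [hY, (hAS x).1]; simp
    simp only [Finset.range_one, Finset.sum_singleton, e0, smul_zero, sub_zero] at h3
    change R (X x) = l • X (AS x)
    refine h1.unique ?_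
    suffices e : (fun n => R (Y n x)) = fun n => l • Y (n + 1) (AS x) by
      rw [e]; exact h3
    funext n
    have e1 : inner ℂ (u (n + 1)) (A (x n)) = inner ℂ (u n) (x n) := by
      rw [← hu n]
      exact (hApos.isSymmetric (u (n + 1)) (x n)).symm
    have e2 : (R ^ (n + 1)) v = R ((R ^ n) v) := by rw [pow_succ']; rfl
    have e3 : l * l⁻¹ ^ (n + 1) = l⁻¹ ^ n := by
      rw [pow_succ', ← mul_assoc, mul_inv_cancel₀ hlne, one_mul]
    rw [hY, hY, (hAS x).2, map_smul, map_smul, e1, e2, smul_smul l, e3]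
end

section
/- Let H and 𝔏 be complex Hilbert spaces, let R be an injective quasinormal bounded operator on H, and let A be an injective positive bounded operator on 𝔏. Then every complex number λ belonging to Λ_int(R, A⊗S) satisfies |λ|·‖A‖ ≥ m_{|R|}. -/
open ContinuousLinearMap

theorem aux_norm_modulus {H : Type*} [NormedAddCommGroup H] [InnerProductSpace ℂ H]
    [CompleteSpace H] (R : H →L[ℂ] H) (y : H) :
    (modulus R).IsPositive ∧ ‖modulus R y‖ = ‖R y‖ := by
  have hpos : (0 : H →L[ℂ] H) ≤ adjoint R ∘L R :=
    (ContinuousLinearMap.nonneg_iff_isPositive _).2 (isPositive_adjoint_comp_self R)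
  have hp : (modulus R).IsPositive :=
    (ContinuousLinearMap.nonneg_iff_isPositive _).1 (CFC.sqrt_nonneg _)
  refine ⟨hp, ?_⟩
  have hsq : modulus R * modulus R = adjoint R ∘L R := CFC.sqrt_mul_sqrt_self _ hpos
  have h1 : inner ℂ (modulus R y) (modulus R y) = inner ℂ (R y) (R y) := by
    rw [← ContinuousLinearMap.adjoint_inner_left, hp.isSelfAdjoint.adjoint_eq,
      ← ContinuousLinearMap.adjoint_inner_left]
    exact congrArg (fun T : H →L[ℂ] H => inner ℂ (T y) y) hsq
  rw [inner_self_eq_norm_sq_to_K, inner_self_eq_norm_sq_to_K] at h1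
  have h2 : ‖modulus R y‖ ^ 2 = ‖R y‖ ^ 2 := by exact_mod_cast h1
  exact (sq_eq_sq₀ (norm_nonneg _) (norm_nonneg _)).1 h2

theorem aux_lower {H : Type*} [NormedAddCommGroup H] [InnerProductSpace ℂ H]
    [CompleteSpace H] (R : H →L[ℂ] H) (y : H) :
    mval (modulus R) * ‖y‖ ≤ ‖R y‖ := by
  by_cases hy : y = 0
  · simp [hy]
  have hn : 0 < ‖y‖ := norm_pos_iff.2 hy
  have hp := (aux_norm_modulus R y).1
  set u : H := ((‖y‖⁻¹ : ℝ) : ℂ) • y with hu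
  have hun : ‖u‖ = 1 := by
    rw [hu, norm_smul, Complex.norm_real, norm_inv, norm_norm]
    field_simp
  have h1 : mval (modulus R) ≤ (modulus R).reApplyInnerSelf u := by
    apply csInf_le
    · refine ⟨0, ?_⟩
      rintro r ⟨x, -, rfl⟩
      exact hp.2 x
    · exact ⟨u, hun, rfl⟩
  have h2 : (modulus R).reApplyInnerSelf u ≤ ‖R u‖ := by
    rw [← (aux_norm_modulus R u).2]
    have := re_inner_le_norm (𝕜 := ℂ) (modulus R u) u
    rw [hun, mul_one] at this
    exact this
  have h3 : ‖R u‖ = ‖y‖⁻¹ * ‖R y‖ := by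
    rw [hu, map_smul, norm_smul, Complex.norm_real, norm_inv, norm_norm]
  have h4 := h1.trans (h2.trans h3.le)
  calc mval (modulus R) * ‖y‖ ≤ (‖y‖⁻¹ * ‖R y‖) * ‖y‖ := by gcongr
    _ = ‖R y‖ := by field_simp

theorem aux_AS {𝔏 : Type*} [NormedAddCommGroup 𝔏] [InnerProductSpace ℂ 𝔏]
    (A : 𝔏 →L[ℂ] 𝔏)
    (AS : lp (fun _ : ℕ => 𝔏) 2 →L[ℂ] lp (fun _ : ℕ => 𝔏) 2)
    (hAS : ∀ x : lp (fun _ : ℕ => 𝔏) 2,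
      (AS x) 0 = 0 ∧ ∀ n : ℕ, (AS x) (n + 1) = A (x n)) (x : lp (fun _ : ℕ => 𝔏) 2) :
    ‖AS x‖ ≤ ‖A‖ * ‖x‖ := by
  have key : ∀ z : lp (fun _ : ℕ => 𝔏) 2, HasSum (fun n => ‖z n‖ ^ 2) (‖z‖ ^ 2) := by
    intro z
    have := lp.hasSum_norm (p := 2) (by norm_num) z
    simpa using this
  have h1 := key (AS x)
  have h2 := (key x).mul_left (‖A‖ ^ 2)
  have h3 := (hasSum_nat_add_iff' 1).2 h1
  simp only [Finset.sum_range_one, (hAS x).1, (hAS x).2, norm_zero] at h3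
  have h4 : ‖AS x‖ ^ 2 - 0 ^ 2 ≤ ‖A‖ ^ 2 * ‖x‖ ^ 2 := by
    refine hasSum_le (fun n => ?_) h3 h2
    rw [← mul_pow]
    gcongr
    exact A.le_opNorm _
  refine (sq_le_sq₀ (norm_nonneg _) (by positivity)).1 ?_
  rw [mul_pow]; linarith

theorem intertwiningValues_norm_lower_bound
    {H 𝔏 : Type*} [NormedAddCommGroup H] [InnerProductSpace ℂ H] [CompleteSpace H] [NormedAddCommGroup 𝔏] [InnerProductSpace ℂ 𝔏] [CompleteSpace 𝔏]
    (R : H →L[ℂ] H) (hRinj : Function.Injective R) (hRqn : IsQuasinormal R)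
    (A : 𝔏 →L[ℂ] 𝔏) (hAinj : Function.Injective A) (hApos : A.IsPositive)
    (AS : lp (fun _ : ℕ => 𝔏) 2 →L[ℂ] lp (fun _ : ℕ => 𝔏) 2)
    (hAS : ∀ x : lp (fun _ : ℕ => 𝔏) 2,
      (AS x) 0 = 0 ∧ ∀ n : ℕ, (AS x) (n + 1) = A (x n)) :
    ∀ l : ℂ, l ∈ intertwiningValues R AS → mval (modulus R) ≤ ‖l‖ * ‖A‖ := by
  rintro l ⟨X, hX, hRX⟩
  have hx : ∃ x, X x ≠ 0 := by
    by_contra! h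
    exact hX (ContinuousLinearMap.ext h)
  obtain ⟨x, hx⟩ := hx
  by_contra! hlt
  set m := mval (modulus R) with hm
  have ha : 0 ≤ ‖l‖ * ‖A‖ := by positivity
  have hmpos : 0 < m := ha.trans_lt hlt
  have step : ∀ z, m * ‖X z‖ ≤ ‖l‖ * ‖X (AS z)‖ := by
    intro z
    have h1 := aux_lower R (X z)
    have h2 : R (X z) = l • X (AS z) := congrArg (fun T => T z) hRX
    rw [h2, norm_smul] at h1
    exact h1
  have main : ∀ n : ℕ, ∀ z, m ^ n * ‖X z‖ ≤ (‖l‖ * ‖A‖) ^ n * (‖X‖ * ‖z‖) := by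
    intro n
    induction n with
    | zero => intro z; simpa using X.le_opNorm z
    | succ n ih =>
      intro z
      calc m ^ (n + 1) * ‖X z‖ = m ^ n * (m * ‖X z‖) := by ring
        _ ≤ m ^ n * (‖l‖ * ‖X (AS z)‖) := mul_le_mul_of_nonneg_left (step z) (by positivity)
        _ = ‖l‖ * (m ^ n * ‖X (AS z)‖) := by ring
        _ ≤ ‖l‖ * ((‖l‖ * ‖A‖) ^ n * (‖X‖ * ‖AS z‖)) := mul_le_mul_of_nonneg_left (ih _) (norm_nonneg _)
        _ ≤ ‖l‖ * ((‖l‖ * ‖A‖) ^ n * (‖X‖ * (‖A‖ * ‖z‖))) := by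
            gcongr; exact aux_AS A AS hAS z
        _ = (‖l‖ * ‖A‖) ^ (n + 1) * (‖X‖ * ‖z‖) := by ring
  have hlim : Filter.Tendsto (fun n : ℕ => ((‖l‖ * ‖A‖) / m) ^ n * (‖X‖ * ‖x‖))
      Filter.atTop (nhds (0 * (‖X‖ * ‖x‖))) :=
    (tendsto_pow_atTop_nhds_zero_of_lt_one (by positivity)
      ((div_lt_one hmpos).2 hlt)).mul_const _
  have hle : ‖X x‖ ≤ 0 * (‖X‖ * ‖x‖) := by
    refine ge_of_tendsto' hlim (fun n => ?_)
    rw [div_pow, div_mul_eq_mul_div, le_div_iff₀ (by positivity), mul_comm]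
    exact main n x
  rw [zero_mul] at hle
  exact hx (norm_le_zero_iff.1 hle)
end

section
/- Let H and 𝔏 be nonzero complex Hilbert spaces, let R be an injective quasinormal bounded operator on H, and let A be an injective positive bounded operator on 𝔏. If it is not the case that both m_{|R|} is an eigenvalue of |R| and ‖A‖ is an eigenvalue of A, then Λ_int(R, A⊗S) = {λ ∈ ℂ : |λ| > m_{|R|}/‖A‖}. -/
open ContinuousLinearMap

section helpers
open Filter Topology

variable {E : Type*} [NormedAddCommGroup E] [InnerProductSpace ℂ E]

lemma aux_mul_apply (S T : E →L[ℂ] E) (x : E) : (S * T) x = S (T x) := rfl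

lemma aux_pow_symm {T : E →L[ℂ] E} (hT : ∀ x y, inner ℂ (T x) y = inner ℂ x (T y)) (n : ℕ) :
    ∀ x y, inner ℂ ((T ^ n) x) y = inner ℂ x ((T ^ n) y) := by
  induction n with
  | zero => intro x y; simp
  | succ n ih =>
    intro x y
    rw [pow_succ, aux_mul_apply, ih, hT, ← aux_mul_apply, ← pow_succ', pow_succ]

lemma aux_telescope {T : E →L[ℂ] E} (hT : ∀ x y, inner ℂ (T x) y = inner ℂ x (T y)) (x : E)
    (n : ℕ) : (inner ℂ (x - (T ^ n) ((T ^ n) x)) (x - T (T x))).re =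
      ∑ k ∈ Finset.range n, ‖(T ^ k) (x - T (T x))‖ ^ 2 := by
  induction n with
  | zero => simp
  | succ n ih =>
    rw [Finset.sum_range_succ, ← ih]
    have h1 : (T ^ (n+1)) ((T ^ (n+1)) x) = (T ^ n) ((T ^ n) (T (T x))) := by
      rw [pow_succ, aux_mul_apply, aux_mul_apply, ← aux_mul_apply T (T ^ n), ← pow_succ', pow_succ,
        aux_mul_apply]
    have h2 : ‖(T ^ n) (x - T (T x))‖ ^ 2 =
        (inner ℂ ((T ^ n) ((T ^ n) (x - T (T x)))) (x - T (T x))).re := by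
      rw [aux_pow_symm hT n, ← inner_self_eq_norm_sq (𝕜 := ℂ)]; rfl
    rw [h2, h1, ← Complex.add_re, ← inner_add_left]
    congr 2
    simp only [map_sub]
    abel

lemma aux_pow_le {T : E →L[ℂ] E} (hT : ∀ x, ‖T x‖ ≤ ‖x‖) (x : E) :
    Antitone (fun n : ℕ => ‖(T ^ n) x‖) := by
  refine antitone_nat_of_succ_le fun n => ?_
  rw [pow_succ', aux_mul_apply]; exact hT _

lemma aux_pow_ge {T : E →L[ℂ] E} (hT : ∀ x, ‖x‖ ≤ ‖T x‖) (x : E) (n : ℕ) :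
    ‖x‖ ≤ ‖(T ^ n) x‖ := by
  induction n with
  | zero => simp
  | succ n ih => rw [pow_succ', aux_mul_apply]; exact ih.trans (hT _)

lemma aux_sq {T : E →L[ℂ] E} (hpos : ∀ x, 0 ≤ (inner ℂ (T x) x).re) {x : E}
    (h : x - T (T x) = 0) : T x = x := by
  have h1 : T (x - T x) = -(x - T x) := by
    rw [map_sub, ← sub_eq_zero.mp h]; abel
  have h2 := hpos (x - T x)
  rw [h1, inner_neg_left, Complex.neg_re] at h2
  have h3 : (inner ℂ (x - T x) (x - T x)).re = ‖x - T x‖ ^ 2 :=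
    inner_self_eq_norm_sq (𝕜 := ℂ) _
  rw [h3] at h2
  have : ‖x - T x‖ = 0 := by nlinarith [norm_nonneg (x - T x)]
  exact (sub_eq_zero.mp (norm_eq_zero.mp this)).symm

lemma aux_lower_s4 {T : E →L[ℂ] E} (hT : ∀ x y, inner ℂ (T x) y = inner ℂ x (T y))
    (hpos : ∀ x, 0 ≤ (inner ℂ (T x) x).re) (hge : ∀ x, ‖x‖ ≤ ‖T x‖) {x : E} {K : ℝ}
    (hK : ∀ n : ℕ, ‖(T ^ n) x‖ ≤ K) : T x = x := by
  apply aux_sq hpos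
  by_contra hw
  set w := x - T (T x) with hwdef
  have hw' : 0 < ‖w‖ := norm_pos_iff.mpr hw
  obtain ⟨n, hn⟩ := exists_nat_gt ((K + K) / ‖w‖)
  rw [div_lt_iff₀ hw'] at hn
  have h1 := aux_telescope hT x n
  have h2 : (n : ℝ) * ‖w‖ ^ 2 ≤ ∑ k ∈ Finset.range n, ‖(T ^ k) w‖ ^ 2 := by
    have := Finset.card_nsmul_le_sum (Finset.range n) (fun k => ‖(T ^ k) w‖ ^ 2) (‖w‖ ^ 2)
      (fun k _ => by have := aux_pow_ge hge w k; gcongr)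
    simpa using this
  have h3 : (inner ℂ (x - (T ^ n) ((T ^ n) x)) w).re ≤ (K + K) * ‖w‖ := by
    refine (re_inner_le_norm (𝕜 := ℂ) _ _).trans ?_
    gcongr
    refine (norm_sub_le _ _).trans ?_
    have := hK 0
    have h4 := hK (n + n)
    rw [pow_add, aux_mul_apply] at h4
    simp at this
    linarith
  rw [← hwdef] at h1
  nlinarith

lemma aux_upper [CompleteSpace E] {T : E →L[ℂ] E}
    (hT : ∀ x y, inner ℂ (T x) y = inner ℂ x (T y))
    (hpos : ∀ x, 0 ≤ (inner ℂ (T x) x).re) (hle : ∀ x, ‖T x‖ ≤ ‖x‖)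
    (hinj : ∀ x, T x = x → x = 0) (x : E) :
    Tendsto (fun n : ℕ => ‖(T ^ n) x‖) atTop (𝓝 0) := by
  have hn1 : ∀ (n : ℕ) (z : E), ‖(T ^ n) z‖ ≤ ‖z‖ := fun n z => by
    simpa using aux_pow_le hle z (Nat.zero_le n)
  -- dense range
  set D : E →L[ℂ] E := 1 - T * T with hD
  have hDa : ∀ z, D z = z - T (T z) := fun z => rfl
  have hdense : DenseRange D := by
    have : (LinearMap.range D.toLinearMap).topologicalClosure = ⊤ := by
      rw [Submodule.topologicalClosure_eq_top_iff, Submodule.eq_bot_iff]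
      intro y hy
      have h0 : D y = 0 := by
        apply ext_inner_left ℂ
        intro z
        rw [inner_zero_right]
        have := (Submodule.mem_orthogonal _ y).mp hy (D z) ⟨z, rfl⟩
        rw [← this, hDa, hDa, inner_sub_left, inner_sub_right, hT, hT]
      exact hinj y (aux_sq hpos h0)
    have h := (Submodule.dense_iff_topologicalClosure_eq_top).mpr this
    exact h
  rw [Metric.tendsto_atTop]
  intro ε hε
  obtain ⟨_, ⟨z, rfl⟩, hz⟩ := Metric.mem_closure_iff.mp (hdense x) (ε / 2) (by positivity)
  rw [dist_eq_norm] at hz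
  set w := D z with hw
  -- ‖T^n w‖ small
  obtain ⟨N, hN⟩ := exists_nat_gt ((‖z‖ + ‖z‖) * ‖w‖ / (ε / 2) ^ 2)
  have hsmall : ‖(T ^ N) w‖ < ε / 2 := by
    rw [div_lt_iff₀ (by positivity)] at hN
    have h1 := aux_telescope hT z N
    rw [← hDa, ← hw] at h1
    have h2 : (N : ℝ) * ‖(T ^ N) w‖ ^ 2 ≤ ∑ k ∈ Finset.range N, ‖(T ^ k) w‖ ^ 2 := by
      have := Finset.card_nsmul_le_sum (Finset.range N) (fun k => ‖(T ^ k) w‖ ^ 2)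
        (‖(T ^ N) w‖ ^ 2)
        (fun k hk => by
          have := aux_pow_le hle w (Finset.mem_range.mp hk).le
          simp only at this
          gcongr)
      simpa using this
    have h3 : (inner ℂ (z - (T ^ N) ((T ^ N) z)) w).re ≤ (‖z‖ + ‖z‖) * ‖w‖ := by
      refine (re_inner_le_norm (𝕜 := ℂ) _ _).trans ?_
      gcongr
      refine (norm_sub_le _ _).trans ?_
      have := (hn1 N _).trans (hn1 N z)
      linarith
    by_contra hcon
    push Not at hcon
    have : (ε / 2) ^ 2 ≤ ‖(T ^ N) w‖ ^ 2 := by gcongr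
    nlinarith [(Nat.cast_nonneg N : (0:ℝ) ≤ N)]
  refine ⟨N, fun n hn => ?_⟩
  rw [Real.dist_eq, sub_zero, abs_of_nonneg (norm_nonneg _)]
  have h5 : (T ^ n) x = (T ^ n) (x - w) + (T ^ n) w := by simp
  calc ‖(T ^ n) x‖ ≤ ‖(T ^ n) (x - w)‖ + ‖(T ^ n) w‖ := by rw [h5]; exact norm_add_le _ _
    _ < ε / 2 + ε / 2 := add_lt_add ((hn1 n _).trans_lt hz)
        ((aux_pow_le hle w hn).trans_lt hsmall)
    _ = ε := by ring

lemma aux_mval_nonneg {P : E →L[ℂ] E} (hpos : ∀ x, 0 ≤ (inner ℂ (P x) x).re) : 0 ≤ mval P := by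
  apply Real.sInf_nonneg
  rintro r ⟨x, -, rfl⟩
  exact hpos x

lemma aux_mval_le {P : E →L[ℂ] E} (hpos : ∀ x, 0 ≤ (inner ℂ (P x) x).re) (x : E) :
    mval P * ‖x‖ ^ 2 ≤ (inner ℂ (P x) x).re := by
  by_cases hx : x = 0
  · simp [hx]
  have hx' : 0 < ‖x‖ := norm_pos_iff.mpr hx
  have : mval P ≤ P.reApplyInnerSelf (((‖x‖⁻¹ : ℝ) : ℂ) • x) := by
    apply csInf_le
    · refine ⟨0, ?_⟩
      rintro r ⟨x, -, rfl⟩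
      exact hpos x
    · refine ⟨_, ?_, rfl⟩
      rw [norm_smul]; simp [hx'.ne']
  rw [P.reApplyInnerSelf_smul, P.reApplyInnerSelf_apply] at this
  rw [Complex.norm_real, norm_inv, norm_norm] at this
  change _ ≤ _ * (inner ℂ (P x) x).re at this
  calc mval P * ‖x‖ ^ 2 ≤ (‖x‖⁻¹ ^ 2 * (inner ℂ (P x) x).re) * ‖x‖ ^ 2 := by gcongr
    _ = _ := by field_simp

lemma aux_mval_norm_le {P : E →L[ℂ] E} (hpos : ∀ x, 0 ≤ (inner ℂ (P x) x).re) (x : E) :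
    mval P * ‖x‖ ≤ ‖P x‖ := by
  by_cases hx : x = 0
  · simp [hx]
  have hx' : 0 < ‖x‖ := norm_pos_iff.mpr hx
  have h1 := aux_mval_le hpos x
  have h2 : (inner ℂ (P x) x).re ≤ ‖P x‖ * ‖x‖ := re_inner_le_norm (𝕜 := ℂ) _ _
  nlinarith

lemma aux_existsY [CompleteSpace E] [Nontrivial E] {P : E →L[ℂ] E} (hP : 0 ≤ P) {b : ℝ}
    (hb : mval P < b) (hb0 : 0 < b) :
    ∃ y : E, y ≠ 0 ∧ ∃ K : ℝ, 0 ≤ K ∧ ∀ n : ℕ, ‖(P ^ n) y‖ ≤ K * b ^ n := by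
  have hsa : IsSelfAdjoint P := IsSelfAdjoint.of_nonneg hP
  have hsp : ∃ t ∈ spectrum ℝ P, t < b := by
    by_contra hcon
    push Not at hcon
    have h1 : algebraMap ℝ (E →L[ℂ] E) b ≤ P := algebraMap_le_of_le_spectrum hcon hsa
    have h2 : b ≤ mval P := by
      obtain ⟨u, hu⟩ := exists_norm_eq E zero_le_one
      refine le_csInf ⟨_, u, hu, rfl⟩ ?_
      rintro r ⟨x, hx, rfl⟩
      have h3 := (ContinuousLinearMap.le_def _ _).mp h1
      have h4 := h3.re_inner_nonneg_left x
      rw [P.reApplyInnerSelf_apply]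
      have h5 : (algebraMap ℝ (E →L[ℂ] E) b) x = (b : ℂ) • x := by
        rw [Algebra.algebraMap_eq_smul_one]; simp
      rw [sub_apply, inner_sub_left, h5, inner_smul_left, inner_self_eq_norm_sq_to_K, hx] at h4
      simp at h4
      simpa using h4
    linarith
  obtain ⟨t, ht, htb⟩ := hsp
  set f : ℝ → ℝ := fun s => max 0 (b - s) with hf
  have hfc : Continuous f := by fun_prop
  have hne : cfc f P ≠ 0 := by
    intro h0
    have := norm_apply_le_norm_cfc f P ht hfc.continuousOn hsa
    rw [h0, norm_zero, Real.norm_eq_abs, abs_of_nonneg (le_max_left _ _)] at this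
    have := (le_max_right 0 (b - t)).trans this
    linarith
  obtain ⟨z, hz⟩ : ∃ z, cfc f P z ≠ 0 := by
    by_contra hcon
    push Not at hcon
    exact hne (ContinuousLinearMap.ext hcon)
  refine ⟨cfc f P z, hz, b * ‖z‖, by positivity, fun n => ?_⟩
  have h1 : (P ^ n) (cfc f P z) = cfc (fun s => s ^ n * f s) P z := by
    rw [cfc_mul (fun s : ℝ => s ^ n) f P (by fun_prop) hfc.continuousOn, cfc_pow_id P n hsa]
    rfl
  have h2 : ‖cfc (fun s => s ^ n * f s) P‖ ≤ b ^ n * b := by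
    apply norm_cfc_le (by positivity)
    intro s hs
    have hs0 : 0 ≤ s := spectrum_nonneg_of_nonneg hP hs
    rw [Real.norm_eq_abs, abs_of_nonneg (by positivity)]
    by_cases hsb : s ≤ b
    · have : f s ≤ b := max_le hb0.le (by linarith)
      gcongr
    · have : f s = 0 := max_eq_left (by linarith)
      rw [this, mul_zero]; positivity
  rw [h1]
  calc _ ≤ ‖cfc (fun s => s ^ n * f s) P‖ * ‖z‖ := le_opNorm _ _
    _ ≤ b ^ n * b * ‖z‖ := by gcongr
    _ = _ := by ring

lemma aux_existsV [CompleteSpace E] [Nontrivial E] {A : E →L[ℂ] E} (hA : 0 ≤ A) {d : ℝ}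
    (hd : d < ‖A‖) (hd0 : 0 < d) :
    ∃ v : ℕ → E, v 0 ≠ 0 ∧ (∀ n, A (v (n + 1)) = v n) ∧
      ∃ K : ℝ, 0 ≤ K ∧ ∀ n : ℕ, ‖v n‖ ≤ K * (d⁻¹) ^ n := by
  have hsa : IsSelfAdjoint A := IsSelfAdjoint.of_nonneg hA
  have hsp : ‖A‖ ∈ spectrum ℝ A := CStarAlgebra.norm_mem_spectrum_of_nonneg hA
  set g : ℕ → ℝ → ℝ := fun n s => max 0 (s - d) * ((max s d)⁻¹) ^ n with hg
  have hmax : ∀ s : ℝ, 0 < max s d := fun s => lt_max_of_lt_right hd0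
  have hgc : ∀ n, Continuous (g n) := fun n => by
    refine Continuous.mul (by fun_prop) (Continuous.pow ?_ n)
    exact Continuous.inv₀ (by fun_prop) (fun s => (hmax s).ne')
  have hne : cfc (g 0) A ≠ 0 := by
    intro h0
    have := norm_apply_le_norm_cfc (g 0) A hsp (hgc 0).continuousOn hsa
    rw [h0, norm_zero, Real.norm_eq_abs] at this
    have h2 := (le_abs_self _).trans this
    simp only [hg, pow_zero, mul_one] at h2
    have := (le_max_right 0 (‖A‖ - d)).trans h2
    linarith
  obtain ⟨z, hz⟩ : ∃ z, cfc (g 0) A z ≠ 0 := by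
    by_contra hcon
    push Not at hcon
    exact hne (ContinuousLinearMap.ext hcon)
  refine ⟨fun n => cfc (g n) A z, hz, fun n => ?_, ‖A‖ * ‖z‖, by positivity, fun n => ?_⟩
  · have h1 : A * cfc (g (n + 1)) A = cfc (g n) A := by
      have h2 : cfc (fun s : ℝ => s * g (n + 1) s) A = cfc (g n) A := by
        apply cfc_congr
        intro s _
        simp only [hg]
        by_cases hs : s ≤ d
        · rw [max_eq_left (by linarith : s - d ≤ 0)]; simp
        · push Not at hs
          have : s ≠ 0 := (hd0.trans hs).ne'
          rw [max_eq_left hs.le, pow_succ]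
          field_simp
      rw [← h2, cfc_mul (fun s : ℝ => s) (g (n + 1)) A (by fun_prop) (hgc _).continuousOn,
        cfc_id' ℝ A hsa]
    change A (cfc (g (n + 1)) A z) = cfc (g n) A z
    rw [← h1]; rfl
  · have h2 : ‖cfc (g n) A‖ ≤ ‖A‖ * d⁻¹ ^ n := by
      apply norm_cfc_le (by positivity)
      intro s hs
      have hsA : s ≤ ‖A‖ := (le_abs_self s).trans (spectrum.norm_le_norm_of_mem hs)
      have := hmax s
      rw [Real.norm_eq_abs, abs_of_nonneg (by simp only [hg]; positivity)]
      simp only [hg]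
      gcongr
      · exact max_le (norm_nonneg _) (by linarith)
      · exact le_max_right _ _
    calc _ ≤ ‖cfc (g n) A‖ * ‖z‖ := le_opNorm _ _
      _ ≤ ‖A‖ * d⁻¹ ^ n * ‖z‖ := by gcongr
      _ = _ := by ring

lemma aux_modulus_nonneg [CompleteSpace E] (R : E →L[ℂ] E) : 0 ≤ modulus R := CFC.sqrt_nonneg _

lemma aux_modulus_norm [CompleteSpace E] (R : E →L[ℂ] E) (x : E) : ‖modulus R x‖ = ‖R x‖ := by
  have h0 : 0 ≤ adjoint R ∘L R := by
    rw [nonneg_iff_isPositive]; exact isPositive_adjoint_comp_self R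
  have h1 : modulus R * modulus R = adjoint R ∘L R := CFC.sqrt_mul_sqrt_self _ h0
  have hp := (nonneg_iff_isPositive _).mp (aux_modulus_nonneg R)
  have h2 : (inner ℂ (modulus R x) (modulus R x)) = inner ℂ (R x) (R x) := by
    rw [hp.isSymmetric.apply_clm, ← aux_mul_apply, h1, comp_apply, adjoint_inner_right]
  rw [← sq_eq_sq₀ (norm_nonneg _) (norm_nonneg _), ← inner_self_eq_norm_sq (𝕜 := ℂ),
    ← inner_self_eq_norm_sq (𝕜 := ℂ), h2]

lemma aux_pow_norm {R P : E →L[ℂ] E} (hc : R ∘L P = P ∘L R) (hn : ∀ x, ‖P x‖ = ‖R x‖) (n : ℕ) :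
    ∀ x, ‖(P ^ n) x‖ = ‖(R ^ n) x‖ := by
  induction n with
  | zero => intro x; simp
  | succ n ih =>
    intro x
    have h : Commute R P := hc
    rw [pow_succ, aux_mul_apply, ih, ← aux_mul_apply, (h.pow_left n).eq, aux_mul_apply, hn, ← aux_mul_apply,
      ← pow_succ']

end helpers

section mainparts
open Filter Topology

variable {H 𝔏 : Type*} [NormedAddCommGroup H] [InnerProductSpace ℂ H] [CompleteSpace H]
  [NormedAddCommGroup 𝔏] [InnerProductSpace ℂ 𝔏] [CompleteSpace 𝔏]

lemma aux_summable {G F : Type*} [NormedAddCommGroup G] [NormedSpace ℂ G]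
    [NormedAddCommGroup F] [NormedSpace ℂ F] [CompleteSpace F] {T : ℕ → G →L[ℂ] F} {K q : ℝ}
    (hq0 : 0 ≤ q) (hq1 : q < 1) (hT : ∀ n, ‖T n‖ ≤ K * q ^ n) :
    ∃ X : G →L[ℂ] F, ∀ u, HasSum (fun n => T n u) (X u) := by
  obtain ⟨X, hXs⟩ : Summable T :=
    Summable.of_norm_bounded ((summable_geometric_of_lt_one hq0 hq1).mul_left K) hT
  exact ⟨X, fun u => (ContinuousLinearMap.apply ℂ F u).hasSum hXs⟩

lemma aux_rank_one (c : ℂ) (v : 𝔏) (w : H) (n : ℕ) :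
    ∃ T : lp (fun _ : ℕ => 𝔏) 2 →L[ℂ] H, ∀ u, T u = c • (inner ℂ v (u n) • w) := by
  refine ⟨(c • (innerSL ℂ v).smulRight w) ∘L lp.evalCLM ℂ (fun _ : ℕ => 𝔏) 2 n, fun u => ?_⟩
  rfl

lemma aux_AS_single (A : 𝔏 →L[ℂ] 𝔏)
    (AS : lp (fun _ : ℕ => 𝔏) 2 →L[ℂ] lp (fun _ : ℕ => 𝔏) 2)
    (hAS : ∀ x : lp (fun _ : ℕ => 𝔏) 2,
      (AS x) 0 = 0 ∧ ∀ n : ℕ, (AS x) (n + 1) = A (x n)) (n : ℕ) (x : 𝔏) :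
    AS (lp.single 2 n x) = lp.single 2 (n + 1) (A x) := by
  apply lp.ext
  funext j
  cases j with
  | zero =>
    rw [(hAS _).1, lp.single_apply_ne _ _ _ (by omega)]
  | succ j =>
    rw [(hAS _).2]
    by_cases h : j = n
    · subst h
      rw [lp.single_apply_self, lp.single_apply_self]
    · rw [lp.single_apply_ne _ _ _ h, lp.single_apply_ne _ _ _ (by omega), map_zero]

lemma aux_pow_denseRange (A : 𝔏 →L[ℂ] 𝔏) (hAinj : Function.Injective A)
    (hAsymm : ∀ x y, inner ℂ (A x) y = inner ℂ x (A y)) (n : ℕ) : DenseRange (A ^ n) := by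
  have hsym := aux_pow_symm hAsymm n
  have hinj : ∀ (n : ℕ) (y : 𝔏), (A ^ n) y = 0 → y = 0 := by
    intro n
    induction n with
    | zero => intro y hy; simpa using hy
    | succ n ih =>
      intro y hy
      rw [pow_succ, aux_mul_apply] at hy
      exact hAinj ((ih _ hy).trans (map_zero A).symm)
  have : (LinearMap.range (A ^ n).toLinearMap).topologicalClosure = ⊤ := by
    rw [Submodule.topologicalClosure_eq_top_iff, Submodule.eq_bot_iff]
    intro y hy
    apply hinj n
    apply ext_inner_left ℂ
    intro z
    rw [inner_zero_right, ← hsym]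
    exact (Submodule.mem_orthogonal _ y).mp hy ((A ^ n) z) ⟨z, rfl⟩
  have h := (Submodule.dense_iff_topologicalClosure_eq_top).mpr this
  exact h

lemma aux_smul_pow {E : Type*} [NormedAddCommGroup E] [InnerProductSpace ℂ E]
    (c : ℝ) (T : E →L[ℂ] E) (n : ℕ) (x : E) :
    ‖((((c : ℝ) : ℂ) • T) ^ n) x‖ = |c| ^ n * ‖(T ^ n) x‖ := by
  rw [smul_pow, smul_apply, norm_smul, norm_pow, Complex.norm_real, Real.norm_eq_abs]

lemma aux_forward (R P : H →L[ℂ] H) (hRinj : Function.Injective R)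
    (A : 𝔏 →L[ℂ] 𝔏) (hAinj : Function.Injective A)
    (AS : lp (fun _ : ℕ => 𝔏) 2 →L[ℂ] lp (fun _ : ℕ => 𝔏) 2)
    (hAS : ∀ x : lp (fun _ : ℕ => 𝔏) 2,
      (AS x) 0 = 0 ∧ ∀ n : ℕ, (AS x) (n + 1) = A (x n))
    (l : ℂ) (X : lp (fun _ : ℕ => 𝔏) 2 →L[ℂ] H) (hX0 : X ≠ 0) (hX : R ∘L X = l • (X ∘L AS))
    (hPsymm : ∀ x y, inner ℂ (P x) y = inner ℂ x (P y))
    (hPpos : ∀ x, 0 ≤ (inner ℂ (P x) x).re)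
    (hAsymm : ∀ x y, inner ℂ (A x) y = inner ℂ x (A y))
    (hApos' : ∀ x, 0 ≤ (inner ℂ (A x) x).re)
    (hpn : ∀ (n : ℕ) (x : H), ‖(P ^ n) x‖ = ‖(R ^ n) x‖)
    (hm0 : 0 ≤ mval P) (hmle : ∀ x, mval P * ‖x‖ ≤ ‖P x‖) (ha : 0 < ‖A‖)
    (heig : ¬ ((∃ x : H, x ≠ 0 ∧ P x = (mval P : ℂ) • x) ∧
      (∃ v : 𝔏, v ≠ 0 ∧ A v = (‖A‖ : ℂ) • v))) :
    mval P / ‖A‖ < ‖l‖ := by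
  have hXa : ∀ u, R (X u) = l • X (AS u) := fun u => by
    have := congrArg (fun T : lp (fun _ : ℕ => 𝔏) 2 →L[ℂ] H => T u) hX
    simpa using this
  have hl : l ≠ 0 := by
    rintro rfl
    apply hX0
    ext u
    apply hRinj
    simp [hXa]
  have hpow : ∀ (n : ℕ) (x : 𝔏),
      (R ^ n) (X (lp.single 2 0 x)) = l ^ n • X (lp.single 2 n ((A ^ n) x)) := by
    intro n x
    induction n with
    | zero => simp
    | succ n ih =>
      rw [pow_succ', aux_mul_apply, ih, map_smul, hXa, aux_AS_single A AS hAS, smul_smul,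
        ← pow_succ, pow_succ' A, aux_mul_apply]
  -- `X_0 ≠ 0`
  obtain ⟨x, hx⟩ : ∃ x, X (lp.single 2 0 x) ≠ 0 := by
    by_contra hcon
    push Not at hcon
    apply hX0
    apply lp.ext_continuousLinearMap (by simp)
    intro n
    ext z
    have hfun : (fun z => X (lp.single 2 n z)) = fun _ => 0 := by
      refine (aux_pow_denseRange A hAinj hAsymm n).equalizer
        (X.continuous.comp (lp.isometry_single n).continuous) continuous_const ?_
      funext z
      have h1 := hpow n z
      rw [hcon, map_zero] at h1
      exact (smul_eq_zero.mp h1.symm).resolve_left (pow_ne_zero n hl)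
    have := congrFun hfun z
    simpa using this
  set y := X (lp.single 2 0 x) with hy
  have hb : ∀ n : ℕ, ‖(P ^ n) y‖ ≤ ‖X‖ * ‖l‖ ^ n * ‖(A ^ n) x‖ := by
    intro n
    rw [hpn, hy, hpow, norm_smul, norm_pow]
    have := X.le_opNorm (lp.single 2 n ((A ^ n) x))
    rw [lp.norm_single (by simp)] at this
    calc _ ≤ ‖l‖ ^ n * (‖X‖ * ‖(A ^ n) x‖) := by gcongr
      _ = _ := by ring
  have hl' : 0 < ‖l‖ := norm_pos_iff.mpr hl
  have hy' : 0 < ‖y‖ := norm_pos_iff.mpr hx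
  by_contra hcon
  push Not at hcon
  rw [le_div_iff₀ ha] at hcon
  have hm : 0 < mval P := lt_of_lt_of_le (by positivity) hcon
  obtain ⟨m, hmdef⟩ : ∃ m, m = mval P := ⟨_, rfl⟩
  rw [← hmdef] at hcon hm hmle heig
  -- scaled operators
  set C : H →L[ℂ] H := ((m⁻¹ : ℝ) : ℂ) • P with hC
  set B : 𝔏 →L[ℂ] 𝔏 := ((‖A‖⁻¹ : ℝ) : ℂ) • A with hB
  have hCge : ∀ z, ‖z‖ ≤ ‖C z‖ := by
    intro z
    have := aux_smul_pow m⁻¹ P 1 z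
    simp only [pow_one] at this
    rw [hC, this, abs_of_pos (by positivity), inv_mul_eq_div, le_div_iff₀ hm, mul_comm]
    exact hmle z
  have hBle : ∀ z, ‖B z‖ ≤ ‖z‖ := by
    intro z
    have := aux_smul_pow ‖A‖⁻¹ A 1 z
    simp only [pow_one] at this
    rw [hB, this, abs_of_pos (by positivity), inv_mul_eq_div, div_le_iff₀ ha, mul_comm]
    exact A.le_opNorm z
  have hCB : ∀ n : ℕ, ‖(C ^ n) y‖ ≤ ‖X‖ * ‖(B ^ n) x‖ := by
    intro n
    rw [hC, hB, aux_smul_pow, aux_smul_pow, abs_of_pos (by positivity),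
      abs_of_pos (by positivity)]
    have h1 : ‖l‖ ≤ m * ‖A‖⁻¹ := by
      rw [← div_eq_mul_inv, le_div_iff₀ ha]; exact hcon
    calc m⁻¹ ^ n * ‖(P ^ n) y‖ ≤ m⁻¹ ^ n * (‖X‖ * ‖l‖ ^ n * ‖(A ^ n) x‖) := by
          gcongr; exact hb n
      _ ≤ m⁻¹ ^ n * (‖X‖ * (m * ‖A‖⁻¹) ^ n * ‖(A ^ n) x‖) := by gcongr
      _ = ‖X‖ * (‖A‖⁻¹ ^ n * ‖(A ^ n) x‖) := by
          rw [mul_pow, inv_pow m]; field_simp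
  have hCsymm : ∀ z w, inner ℂ (C z) w = inner ℂ z (C w) := by
    intro z w
    simp only [hC, smul_apply, inner_smul_left, inner_smul_right, Complex.conj_ofReal, hPsymm]
  have hBsymm : ∀ z w, inner ℂ (B z) w = inner ℂ z (B w) := by
    intro z w
    simp only [hB, smul_apply, inner_smul_left, inner_smul_right, Complex.conj_ofReal, hAsymm]
  have hCpos : ∀ z, 0 ≤ (inner ℂ (C z) z).re := by
    intro z
    simp only [hC, smul_apply, inner_smul_left, Complex.conj_ofReal, Complex.re_ofReal_mul]
    have := hPpos z
    positivity
  have hBpos : ∀ z, 0 ≤ (inner ℂ (B z) z).re := by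
    intro z
    simp only [hB, smul_apply, inner_smul_left, Complex.conj_ofReal, Complex.re_ofReal_mul]
    have := hApos' z
    positivity
  have hBn : ∀ n : ℕ, ‖(B ^ n) x‖ ≤ ‖x‖ := fun n => by
    simpa using aux_pow_le hBle x (Nat.zero_le n)
  apply heig
  constructor
  · refine ⟨y, hx, ?_⟩
    have h1 : C y = y := aux_lower_s4 hCsymm hCpos hCge (K := ‖X‖ * ‖x‖) (x := y)
      (fun n => (hCB n).trans (by gcongr; exact hBn n))
    have h2 : (m : ℂ) • C y = P y := by
      rw [hC, smul_apply, smul_smul, Complex.ofReal_inv, mul_inv_cancel₀, one_smul]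
      exact_mod_cast hm.ne'
    rw [← h2, h1]
  · by_contra hno
    push Not at hno
    have hinj : ∀ z, B z = z → z = 0 := by
      intro z hz
      by_contra hz0
      apply hno z hz0
      have h2 : (‖A‖ : ℂ) • B z = A z := by
        rw [hB, smul_apply, smul_smul, Complex.ofReal_inv, mul_inv_cancel₀, one_smul]
        exact_mod_cast ha.ne'
      rw [← h2, hz]
    have ht := (aux_upper hBsymm hBpos hBle hinj x).const_mul ‖X‖
    rw [mul_zero] at ht
    have := ge_of_tendsto' ht (fun n => (aux_pow_ge hCge y n).trans (hCB n))
    linarith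

set_option maxHeartbeats 400000 in
lemma aux_backward [Nontrivial H] [Nontrivial 𝔏] (R P : H →L[ℂ] H)
    (A : 𝔏 →L[ℂ] 𝔏) (hA0 : 0 ≤ A)
    (hAsymm : ∀ x y, inner ℂ (A x) y = inner ℂ x (A y))
    (AS : lp (fun _ : ℕ => 𝔏) 2 →L[ℂ] lp (fun _ : ℕ => 𝔏) 2)
    (hAS : ∀ x : lp (fun _ : ℕ => 𝔏) 2,
      (AS x) 0 = 0 ∧ ∀ n : ℕ, (AS x) (n + 1) = A (x n))
    (l : ℂ) (hP0 : 0 ≤ P)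
    (hpn : ∀ (n : ℕ) (x : H), ‖(P ^ n) x‖ = ‖(R ^ n) x‖)
    (hm0 : 0 ≤ mval P) (ha : 0 < ‖A‖) (hl : mval P / ‖A‖ < ‖l‖) :
    ∃ X : lp (fun _ : ℕ => 𝔏) 2 →L[ℂ] H, X ≠ 0 ∧ R ∘L X = l • (X ∘L AS) := by
  have hl0 : 0 < ‖l‖ := lt_of_le_of_lt (by positivity) hl
  have hlne : l ≠ 0 := norm_pos_iff.mp hl0
  rw [div_lt_iff₀ ha] at hl
  obtain ⟨b, hmb, hbl⟩ := exists_between hl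
  have hb0 : 0 < b := hm0.trans_lt hmb
  have hd' : b / ‖l‖ < ‖A‖ := by rw [div_lt_iff₀ hl0]; linarith
  obtain ⟨d, hbd, hdA⟩ := exists_between hd'
  have hd0 : 0 < d := lt_trans (by positivity) hbd
  obtain ⟨y, hy0, K, hK0, hK⟩ := aux_existsY hP0 hmb hb0
  obtain ⟨v, hv0, hAv, K', hK'0, hK'⟩ := aux_existsV hA0 hdA hd0
  set q : ℝ := ‖l‖⁻¹ * d⁻¹ * b with hq
  have hq0 : 0 ≤ q := by positivity
  have hq1 : q < 1 := by
    rw [div_lt_iff₀ hl0] at hbd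
    rw [hq, ← mul_inv, inv_mul_eq_div, div_lt_one (by positivity)]
    linarith
  have hex : ∀ n : ℕ, ∃ T : lp (fun _ : ℕ => 𝔏) 2 →L[ℂ] H,
      ∀ u, T u = (l⁻¹) ^ n • (inner ℂ (v n) (u n) • (R ^ n) y) :=
    fun n => aux_rank_one _ _ _ n
  choose T hT using hex
  have hTn : ∀ n, ‖T n‖ ≤ K * K' * q ^ n := by
    intro n
    apply opNorm_le_bound _ (by positivity)
    intro u
    rw [hT, norm_smul, norm_smul, norm_pow, norm_inv]
    have h1 : ‖inner ℂ (v n) (u n)‖ ≤ K' * d⁻¹ ^ n * ‖u‖ := by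
      refine (norm_inner_le_norm _ _).trans ?_
      have := hK' n
      have h2 : ‖u n‖ ≤ ‖u‖ := lp.norm_apply_le_norm (by simp) u n
      gcongr
    have h2 : ‖(R ^ n) y‖ ≤ K * b ^ n := by rw [← hpn]; exact hK n
    calc _ ≤ ‖l‖⁻¹ ^ n * ((K' * d⁻¹ ^ n * ‖u‖) * (K * b ^ n)) := by gcongr
      _ = _ := by rw [hq, mul_pow, mul_pow]; ring
  obtain ⟨X, hXa⟩ := aux_summable (K := K * K') hq0 hq1 hTn
  refine ⟨X, ?_, ?_⟩
  · intro h0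
    have h1 := hXa (lp.single 2 0 (v 0))
    have h2 : HasSum (fun n => T n (lp.single 2 0 (v 0))) (T 0 (lp.single 2 0 (v 0))) := by
      apply hasSum_single
      intro n hn
      rw [hT, lp.single_apply_ne _ _ _ hn]
      simp
    have h3 := h1.unique h2
    rw [h0, hT, lp.single_apply_self] at h3
    rw [pow_zero, one_smul, pow_zero] at h3
    rcases smul_eq_zero.mp h3.symm with h3 | h3
    · exact hv0 (inner_self_eq_zero.mp h3)
    · exact hy0 h3
  · ext u
    have h1 := R.hasSum (hXa u)
    have h2 := (hXa (AS u))
    rw [← hasSum_nat_add_iff' 1] at h2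
    have h3 : T 0 (AS u) = 0 := by rw [hT, (hAS u).1]; simp
    simp only [Finset.sum_range_one, h3, sub_zero] at h2
    have h4 := h2.const_smul l
    have h5 : (fun n => l • T (n + 1) (AS u)) = fun n => R (T n u) := by
      funext n
      rw [hT, hT, (hAS u).2, ← hAsymm, hAv, map_smul, map_smul, pow_succ' R, aux_mul_apply,
        smul_smul, pow_succ' l⁻¹, ← mul_assoc, mul_inv_cancel₀ hlne, one_mul]
    rw [h5] at h4
    exact h1.unique h4

end mainparts

theorem intertwiningValues_eq_open_disc_compl
    {H 𝔏 : Type*} [NormedAddCommGroup H] [InnerProductSpace ℂ H] [CompleteSpace H] [NormedAddCommGroup 𝔏] [InnerProductSpace ℂ 𝔏] [CompleteSpace 𝔏] [Nontrivial H] [Nontrivial 𝔏]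
    (R : H →L[ℂ] H) (hRinj : Function.Injective R) (hRqn : IsQuasinormal R)
    (A : 𝔏 →L[ℂ] 𝔏) (hAinj : Function.Injective A) (hApos : A.IsPositive)
    (AS : lp (fun _ : ℕ => 𝔏) 2 →L[ℂ] lp (fun _ : ℕ => 𝔏) 2)
    (hAS : ∀ x : lp (fun _ : ℕ => 𝔏) 2,
      (AS x) 0 = 0 ∧ ∀ n : ℕ, (AS x) (n + 1) = A (x n))
    (heig : ¬ ((∃ x : H, x ≠ 0 ∧ modulus R x = (mval (modulus R) : ℂ) • x) ∧
      (∃ v : 𝔏, v ≠ 0 ∧ A v = (‖A‖ : ℂ) • v))) :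
    intertwiningValues R AS = {l : ℂ | mval (modulus R) / ‖A‖ < ‖l‖} := by
  obtain ⟨P, hPdef⟩ : ∃ P, P = modulus R := ⟨_, rfl⟩
  have hP0 : 0 ≤ P := hPdef ▸ aux_modulus_nonneg R
  have hPp : P.IsPositive := (nonneg_iff_isPositive _).mp hP0
  have hPsymm : ∀ x y, inner ℂ (P x) y = inner ℂ x (P y) := fun x y => hPp.isSymmetric.apply_clm x y
  have hPpos : ∀ x, 0 ≤ (inner ℂ (P x) x).re := fun x => hPp.re_inner_nonneg_left x
  have hAsymm : ∀ x y, inner ℂ (A x) y = inner ℂ x (A y) :=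
    fun x y => hApos.isSymmetric.apply_clm x y
  have hApos' : ∀ x, 0 ≤ (inner ℂ (A x) x).re := fun x => hApos.re_inner_nonneg_left x
  have hA0 : 0 ≤ A := (nonneg_iff_isPositive _).mpr hApos
  have hnorm : ∀ x, ‖P x‖ = ‖R x‖ := fun x => hPdef ▸ aux_modulus_norm R x
  have hcomm : R ∘L P = P ∘L R := by rw [hPdef]; exact hRqn
  have hpn := aux_pow_norm hcomm hnorm
  rw [← hPdef] at heig ⊢
  have hm0 : 0 ≤ mval P := aux_mval_nonneg hPpos
  have hmle := aux_mval_norm_le hPpos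
  have ha : 0 < ‖A‖ := by
    rw [norm_pos_iff]
    rintro rfl
    obtain ⟨x, hx⟩ := exists_ne (0 : 𝔏)
    exact hx (hAinj (by simp))
  ext l
  simp only [intertwiningValues, Set.mem_ofPred_eq]
  constructor
  · rintro ⟨X, hX0, hX⟩
    exact aux_forward R P hRinj A hAinj AS hAS l X hX0 hX hPsymm hPpos hAsymm hApos' hpn hm0 hmle
      ha heig
  · intro hl
    exact aux_backward R P A hA0 hAsymm AS hAS l hP0 hpn hm0 ha hl
end

section
/- Let T be a pure quasinormal bounded operator on a nonzero complex Hilbert space H. If both m_{|T|} and ‖T‖ are eigenvalues of |T|, then the set of extended eigenvalues of T is σ_ext(T) = {λ ∈ ℂ : |λ| ≥ m_{|T|}/‖T‖}. -/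
open ContinuousLinearMap

theorem aux_modulus_sa {H : Type*} [NormedAddCommGroup H] [InnerProductSpace ℂ H] [CompleteSpace H]
    (T : H →L[ℂ] H) : adjoint (modulus T) = modulus T := by
  have h : IsSelfAdjoint (modulus T) := IsSelfAdjoint.of_nonneg (CFC.sqrt_nonneg _)
  exact h.adjoint_eq

theorem aux_modulus_sq {H : Type*} [NormedAddCommGroup H] [InnerProductSpace ℂ H] [CompleteSpace H]
    (T : H →L[ℂ] H) (x : H) : modulus T (modulus T x) = adjoint T (T x) := by
  have h0 : (0 : H →L[ℂ] H) ≤ adjoint T ∘L T := by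
    have := star_mul_self_nonneg T
    exact this
  have h : modulus T * modulus T = adjoint T ∘L T := CFC.sqrt_mul_sqrt_self _ h0
  exact congrArg (fun A : H →L[ℂ] H => A x) h

theorem aux_norm {H : Type*} [NormedAddCommGroup H] [InnerProductSpace ℂ H] [CompleteSpace H]
    (T : H →L[ℂ] H) (x : H) : ‖modulus T x‖ = ‖T x‖ := by
  have h : inner ℂ (modulus T x) (modulus T x) = inner ℂ (T x) (T x) := by
    rw [← adjoint_inner_right, aux_modulus_sa, aux_modulus_sq, adjoint_inner_right]
  rw [inner_self_eq_norm_sq_to_K, inner_self_eq_norm_sq_to_K] at h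
  have h2 : ‖modulus T x‖ ^ 2 = ‖T x‖ ^ 2 := by exact_mod_cast h
  exact (sq_eq_sq₀ (norm_nonneg _) (norm_nonneg _)).1 h2

theorem aux_comm {H : Type*} [NormedAddCommGroup H] [InnerProductSpace ℂ H] [CompleteSpace H]
    (T : H →L[ℂ] H) (h : IsQuasinormal T) (x : H) : modulus T (T x) = T (modulus T x) :=
  (congrArg (fun A : H →L[ℂ] H => A x) h).symm

theorem aux_comm' {H : Type*} [NormedAddCommGroup H] [InnerProductSpace ℂ H] [CompleteSpace H]
    (T : H →L[ℂ] H) (h : IsQuasinormal T) (x : H) :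
    modulus T (adjoint T x) = adjoint T (modulus T x) := by
  have := congrArg adjoint h
  rw [adjoint_comp, adjoint_comp, aux_modulus_sa] at this
  exact congrArg (fun A : H →L[ℂ] H => A x) this

theorem aux_inj {H : Type*} [NormedAddCommGroup H] [InnerProductSpace ℂ H] [CompleteSpace H]
    (T : H →L[ℂ] H) (h : IsQuasinormal T) (hp : IsPure T) (x : H) (hx : T x = 0) : x = 0 := by
  have key : ∀ y, T y = 0 → T (adjoint T y) = 0 := by
    intro y hy
    have h1 : modulus T y = 0 := by rw [← norm_eq_zero, aux_norm, hy, norm_zero]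
    rw [← norm_eq_zero, ← aux_norm, aux_comm' T h, h1, map_zero, norm_zero]
  have := hp (LinearMap.ker (T : H →ₗ[ℂ] H)) (ContinuousLinearMap.isClosed_ker T)
    (fun y hy => by
      have hy : T y = 0 := hy
      simp [hy])
    (fun y hy => key y hy)
    (fun y hy => by
      have hy : T y = 0 := hy
      rw [key y hy, hy, map_zero])
  have hx' : x ∈ LinearMap.ker (T : H →ₗ[ℂ] H) := hx
  rw [this] at hx'
  simpa using hx'

theorem aux_wander {H : Type*} [NormedAddCommGroup H] [InnerProductSpace ℂ H] [CompleteSpace H]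
    (T : H →L[ℂ] H) (h : IsQuasinormal T) (hp : IsPure T) (a : ℂ)
    (hx : ∃ x : H, x ≠ 0 ∧ modulus T x = a • x) :
    ∃ x : H, ‖x‖ = 1 ∧ modulus T x = a • x ∧ adjoint T x = 0 := by
  obtain ⟨x, hx0, hx⟩ := hx
  by_contra hcon
  push Not at hcon
  have hz : ∀ y, modulus T y = a • y → adjoint T y = 0 → y = 0 := by
    intro y h1 h2
    by_contra hy
    have hn : (‖y‖ : ℂ) ≠ 0 := by simpa using hy
    refine hcon ((‖y‖ : ℂ)⁻¹ • y) ?_ ?_ ?_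
    · rw [norm_smul]; simp [hy]
    · rw [map_smul, h1, smul_comm]
    · rw [map_smul, h2, smul_zero]
  let M : Submodule ℂ H := LinearMap.ker ((modulus T - a • ContinuousLinearMap.id ℂ H : H →L[ℂ] H) : H →ₗ[ℂ] H)
  have hM : ∀ y, y ∈ M ↔ modulus T y = a • y := by
    intro y
    simp [M, sub_eq_zero]
  have hT : ∀ y ∈ M, T y ∈ M := by
    intro y hy
    rw [hM] at *
    rw [aux_comm T h, hy, map_smul]
  have hT' : ∀ y ∈ M, adjoint T y ∈ M := by
    intro y hy
    rw [hM] at *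
    rw [aux_comm' T h, hy, map_smul]
  have hTT : ∀ y ∈ M, adjoint T (T y) = (a * a) • y := by
    intro y hy
    rw [hM] at hy
    rw [← aux_modulus_sq, hy, map_smul, hy, smul_smul]
  have hb := hp M (ContinuousLinearMap.isClosed_ker _) hT hT' (by
    intro y hy
    rw [← sub_eq_zero]
    refine hz _ ?_ ?_
    · rw [← hM]
      exact M.sub_mem (hT _ (hT' _ hy)) (hT' _ (hT _ hy))
    · rw [map_sub, hTT _ (hT' _ hy), hTT _ hy, map_smul, sub_self])
  have : x ∈ M := (hM x).2 hx
  rw [hb] at this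
  exact hx0 (by simpa using this)

theorem aux_chain {H : Type*} [NormedAddCommGroup H] [InnerProductSpace ℂ H] [CompleteSpace H]
    (T : H →L[ℂ] H) (h : IsQuasinormal T) (hp : IsPure T) (a : ℝ) (ha : 0 < a)
    (hx : ∃ x : H, x ≠ 0 ∧ modulus T x = (a : ℂ) • x) :
    ∃ e : ℕ → H, Orthonormal ℂ e ∧ (∀ n, T (e n) = (a : ℂ) • e (n + 1)) ∧
      adjoint T (e 0) = 0 ∧ ∀ n, adjoint T (e (n + 1)) = (a : ℂ) • e n := by
  obtain ⟨v, hv1, hv, hv0⟩ := aux_wander T h hp a hx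
  have ha' : (a : ℂ) ≠ 0 := by exact_mod_cast ha.ne'
  let e : ℕ → H := fun n => Nat.rec v (fun _ y => (a : ℂ)⁻¹ • T y) n
  have e0 : e 0 = v := rfl
  have es : ∀ n, e (n + 1) = (a : ℂ)⁻¹ • T (e n) := fun n => rfl
  have h1 : ∀ n, T (e n) = (a : ℂ) • e (n + 1) := by
    intro n
    rw [es, smul_smul, mul_inv_cancel₀ ha', one_smul]
  have hm : ∀ n, modulus T (e n) = (a : ℂ) • e n := by
    intro n
    induction n with
    | zero => exact hv
    | succ n ih => rw [es, map_smul, aux_comm T h, ih, map_smul, smul_comm]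
  have h2 : ∀ n, adjoint T (e (n + 1)) = (a : ℂ) • e n := by
    intro n
    rw [es, map_smul, ← aux_modulus_sq, hm, map_smul, hm, smul_smul, inv_mul_cancel₀ ha', one_smul]
  have h3 : ∀ j, inner ℂ (e 0) (e (j + 1)) = 0 := by
    intro j
    rw [es, inner_smul_right, ← adjoint_inner_left, e0, hv0, inner_zero_left, mul_zero]
  refine ⟨e, ?_, h1, hv0, h2⟩
  rw [orthonormal_iff_ite]
  intro i
  induction i with
  | zero =>
    intro j
    cases j with
    | zero => simp [e0, hv1]
    | succ j => simp [h3]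
  | succ i ih =>
    intro j
    cases j with
    | zero => rw [← inner_conj_symm, h3]; simp
    | succ j =>
      rw [es j, inner_smul_right, ← adjoint_inner_left, h2, inner_smul_left, ih]
      simp [ha']

theorem aux_construct {H : Type*} [NormedAddCommGroup H] [InnerProductSpace ℂ H] [CompleteSpace H]
    (e f : ℕ → H) (he : Orthonormal ℂ e) (hf : Orthonormal ℂ f) (q : ℂ) (hq : ‖q‖ ≤ 1) :
    ∃ X : H →L[ℂ] H, ∀ x, HasSum (fun n => (q ^ n * inner ℂ (f n) x) • e n) (X x) := by
  have hle : ∀ x n, ‖q ^ n * inner ℂ (f n) x‖ ^ 2 ≤ ‖inner ℂ (f n) x‖ ^ 2 := by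
    intro x n
    rw [norm_mul, norm_pow]
    gcongr
    exact mul_le_of_le_one_left (norm_nonneg _) (pow_le_one₀ (norm_nonneg _) hq)
  have hsum : ∀ x, Summable (fun n => ‖q ^ n * inner ℂ (f n) x‖ ^ 2) := fun x =>
    Summable.of_nonneg_of_le (fun n => by positivity) (hle x) (hf.inner_products_summable x)
  have hmem : ∀ x, Memℓp (fun n => q ^ n * inner ℂ (f n) x) 2 := by
    intro x
    refine memℓp_gen ?_
    simpa using hsum x
  let W := he.orthogonalFamily.linearIsometry
  let C : H →ₗ[ℂ] lp (fun _ : ℕ => ℂ) 2 :=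
    { toFun := fun x => ⟨fun n => q ^ n * inner ℂ (f n) x, hmem x⟩
      map_add' := by
        intro x y
        ext n
        simp [mul_add]
        rfl
      map_smul' := by
        intro c x
        ext n
        simp [inner_smul_right]
        ring }
  have hC : ∀ x, ‖C x‖ ≤ 1 * ‖x‖ := by
    intro x
    rw [one_mul]
    refine le_of_sq_le_sq ?_ (norm_nonneg _)
    have h1 := lp.norm_rpow_eq_tsum (p := 2) (by norm_num) (C x)
    have h2 : ‖C x‖ ^ 2 = ∑' n, ‖q ^ n * inner ℂ (f n) x‖ ^ 2 := by
      simp only [ENNReal.toReal_ofNat, Real.rpow_ofNat] at h1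
      exact h1
    rw [h2]
    exact ((hsum x).tsum_le_tsum (hle x) (hf.inner_products_summable x)).trans
      (hf.tsum_inner_products_le x)
  refine ⟨W.toContinuousLinearMap ∘L (C.mkContinuous 1 hC), fun x => ?_⟩
  have := he.orthogonalFamily.hasSum_linearIsometry (C x)
  simpa [C] using this

theorem extSpectrum_pure_quasinormal_of_eigenvalues
    {H : Type*} [NormedAddCommGroup H] [InnerProductSpace ℂ H] [CompleteSpace H] [Nontrivial H]
    (T : H →L[ℂ] H) (hTqn : IsQuasinormal T) (hTpure : IsPure T)
    (hmeig : ∃ x : H, x ≠ 0 ∧ modulus T x = (mval (modulus T) : ℂ) • x)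
    (hneig : ∃ x : H, x ≠ 0 ∧ modulus T x = (‖T‖ : ℂ) • x) :
    extSpectrum T = {l : ℂ | mval (modulus T) / ‖T‖ ≤ ‖l‖} := by
  have hinj := aux_inj T hTqn hTpure
  have hpos : (0 : H →L[ℂ] H) ≤ modulus T := CFC.sqrt_nonneg _
  have hnn : ∀ x, 0 ≤ (modulus T).reApplyInnerSelf x :=
    ((ContinuousLinearMap.nonneg_iff_isPositive _).1 hpos).2
  have hbdd : BddBelow {r : ℝ | ∃ x : H, ‖x‖ = 1 ∧ r = (modulus T).reApplyInnerSelf x} := by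
    refine ⟨0, ?_⟩
    rintro r ⟨x, -, rfl⟩
    exact hnn x
  have hN : 0 < ‖T‖ := by
    rw [norm_pos_iff]
    rintro rfl
    obtain ⟨x, hx, -⟩ := hmeig
    exact hx (hinj x rfl)
  set m := mval (modulus T) with hmdef
  have hm0 : 0 ≤ m := by
    refine Real.sInf_nonneg ?_
    rintro r ⟨x, -, rfl⟩
    exact hnn x
  have hm : 0 < m := by
    refine lt_of_le_of_ne hm0 fun h0 => ?_
    obtain ⟨x, hx0, hx⟩ := hmeig
    rw [← h0] at hx
    refine hx0 (hinj x ?_)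
    rw [← norm_eq_zero, ← aux_norm, hx]
    simp
  have hlow1 : ∀ x, ‖x‖ = 1 → m ≤ ‖T x‖ := by
    intro x hx
    have h1 : m ≤ (modulus T).reApplyInnerSelf x := csInf_le hbdd ⟨x, hx, rfl⟩
    refine h1.trans ?_
    rw [ContinuousLinearMap.reApplyInnerSelf_apply]
    refine (RCLike.re_le_norm _).trans ((norm_inner_le_norm _ _).trans ?_)
    rw [hx, mul_one, aux_norm]
  have hlow : ∀ x, m * ‖x‖ ≤ ‖T x‖ := by
    intro x
    by_cases hx : x = 0
    · simp [hx]
    have hx' : 0 < ‖x‖ := norm_pos_iff.2 hx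
    have := hlow1 ((‖x‖ : ℂ)⁻¹ • x) (by rw [norm_smul]; simp [hx])
    rw [map_smul, norm_smul] at this
    simp only [norm_inv, Complex.norm_real, norm_norm] at this
    rw [inv_mul_eq_div, le_div_iff₀ hx'] at this
    exact this
  have hlown : ∀ n x, m ^ n * ‖x‖ ≤ ‖(T ^ n) x‖ := by
    intro n
    induction n with
    | zero => intro x; simp
    | succ n ih =>
      intro x
      rw [pow_succ' T]
      calc m ^ (n + 1) * ‖x‖ = m * (m ^ n * ‖x‖) := by ring
        _ ≤ m * ‖(T ^ n) x‖ := by gcongr; exact ih x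
        _ ≤ _ := hlow _
  ext l
  simp only [extSpectrum, Set.mem_ofPred_eq]
  constructor
  · rintro ⟨X, hX, hTX⟩
    by_contra hcon
    push Not at hcon
    rw [lt_div_iff₀ hN] at hcon
    have hTX' : ∀ x, T (X x) = l • X (T x) := fun x =>
      congrArg (fun A : H →L[ℂ] H => A x) hTX
    have hpow : ∀ n x, (T ^ n) (X x) = l ^ n • X ((T ^ n) x) := by
      intro n
      induction n with
      | zero => intro x; simp
      | succ n ih =>
        intro x
        rw [pow_succ T]
        change (T ^ n) (T (X x)) = l ^ (n + 1) • X ((T ^ n) (T x))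
        rw [hTX', map_smul, ih, smul_smul, pow_succ']
    apply hX
    ext x
    have hest : ∀ n : ℕ, ‖X x‖ ≤ (‖l‖ * ‖T‖ / m) ^ n * (‖X‖ * ‖x‖) := by
      intro n
      have h1 := hlown n (X x)
      rw [hpow, norm_smul, norm_pow] at h1
      have h2 : ‖(T ^ n) x‖ ≤ ‖T‖ ^ n * ‖x‖ :=
        ((T ^ n).le_opNorm x).trans (by gcongr; exact norm_pow_le T n)
      have h3 : m ^ n * ‖X x‖ ≤ ‖l‖ ^ n * (‖X‖ * (‖T‖ ^ n * ‖x‖)) :=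
        h1.trans (by gcongr; exact (X.le_opNorm _).trans (by gcongr))
      rw [div_pow, mul_pow, div_mul_eq_mul_div, le_div_iff₀ (by positivity)]
      linarith
    have hlim : Filter.Tendsto (fun n : ℕ => (‖l‖ * ‖T‖ / m) ^ n * (‖X‖ * ‖x‖)) Filter.atTop
        (nhds (0 * (‖X‖ * ‖x‖))) :=
      (tendsto_pow_atTop_nhds_zero_of_lt_one (by positivity)
        ((div_lt_one hm).2 hcon)).mul_const _
    rw [zero_mul] at hlim
    have := ge_of_tendsto' hlim hest
    simpa using this
  · intro hl
    have hl0 : l ≠ 0 := by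
      rintro rfl
      have : 0 < m / ‖T‖ := by positivity
      simp only [norm_zero] at hl
      linarith
    have hNc : (‖T‖ : ℂ) ≠ 0 := by exact_mod_cast hN.ne'
    obtain ⟨e, he, he1, he2, he3⟩ := aux_chain T hTqn hTpure m hm hmeig
    obtain ⟨f, hf, hf1, hf2, hf3⟩ := aux_chain T hTqn hTpure ‖T‖ hN hneig
    let q : ℂ := m / (l * ‖T‖)
    have hq : ‖q‖ ≤ 1 := by
      have hl' : 0 < ‖l‖ := norm_pos_iff.2 hl0
      simp only [q, norm_div, norm_mul, Complex.norm_real, norm_norm, Real.norm_eq_abs,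
        abs_of_pos hm, abs_of_pos hN]
      rw [div_le_one (by positivity)]
      rwa [div_le_iff₀ hN] at hl
    obtain ⟨X, hX⟩ := aux_construct e f he hf q hq
    refine ⟨X, ?_, ?_⟩
    · rintro rfl
      have h1 := hX (f 0)
      have h2 : HasSum (fun n => (q ^ n * inner ℂ (f n) (f 0)) • e n) (e 0) := by
        have := hasSum_single (f := fun n => (q ^ n * inner ℂ (f n) (f 0)) • e n) 0 (by
          intro n hn
          simp [hf.2 hn])
        simpa [hf.1 0] using this
      have h3 : (0 : H) = e 0 := h1.unique h2
      exact he.ne_zero 0 h3.symm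
    · ext x
      change T (X x) = l • X (T x)
      have h1 := (hX x).mapL T
      have h2 := (hX (T x)).const_smul l
      rw [← hasSum_nat_add_iff' 1] at h2
      have h0 : inner ℂ (f 0) (T x) = 0 := by
        rw [← adjoint_inner_left, hf2, inner_zero_left]
      simp only [Finset.range_one, Finset.sum_singleton, h0, mul_zero, zero_smul, smul_zero,
        sub_zero] at h2
      refine h1.unique ?_
      convert h2 using 2 with n
      rw [map_smul, he1, ← adjoint_inner_left, hf3, inner_smul_left, smul_smul, smul_smul]
      congr 1
      simp only [q, Complex.conj_ofReal, pow_succ]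
      field_simp
end

section
/- Let T be a pure quasinormal bounded operator on a nonzero complex Hilbert space H. If it is not the case that both m_{|T|} and ‖T‖ are eigenvalues of |T|, then the set of extended eigenvalues of T is σ_ext(T) = {λ ∈ ℂ : |λ| > m_{|T|}/‖T‖}. -/
open ContinuousLinearMap

open Filter Topology

namespace PQ

variable {H : Type*} [NormedAddCommGroup H] [InnerProductSpace ℂ H] [CompleteSpace H]

/-- Working package for the modulus. -/
structure Pack (T P : H →L[ℂ] H) : Prop where
  nn : 0 ≤ P
  sq : ∀ x, adjoint T (T x) = P (P x)
  sa : ∀ x y, inner ℂ (P x) y = inner ℂ x (P y)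
  pos : ∀ x, 0 ≤ (inner ℂ (P x) x).re
  comm : Commute P T
  comm' : Commute P (adjoint T)

theorem pack (T : H →L[ℂ] H) (h : IsQuasinormal T) : Pack T (modulus T) := by
  have nn : 0 ≤ modulus T := CFC.sqrt_nonneg _
  have hp := (ContinuousLinearMap.nonneg_iff_isPositive _).1 nn
  have hsa : star (modulus T) = modulus T := hp.isSelfAdjoint
  have hc : Commute (modulus T) T := h.symm
  refine ⟨nn, ?_, ?_, ?_, hc, ?_⟩
  · intro x
    have h0 : (0 : H →L[ℂ] H) ≤ adjoint T ∘L T := by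
      have := star_mul_self_nonneg T
      exact this
    have := CFC.sqrt_mul_sqrt_self (adjoint T ∘L T) h0
    exact (congrArg (fun S : H →L[ℂ] H => S x) this).symm
  · intro x y
    exact hp.isSymmetric x y
  · intro x
    exact hp.2 x
  · have := hc.star_star
    rw [hsa] at this
    exact this

theorem norm_eq {T P : H →L[ℂ] H} (h : Pack T P) (x : H) : ‖T x‖ = ‖P x‖ := by
  have h1 : (inner ℂ (T x) (T x) : ℂ) = inner ℂ (P x) (P x) := by
    rw [← ContinuousLinearMap.adjoint_inner_left, h.sq, h.sa]
  rw [inner_self_eq_norm_sq_to_K, inner_self_eq_norm_sq_to_K] at h1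
  have h2 : ‖T x‖ ^ 2 = ‖P x‖ ^ 2 := by exact_mod_cast h1
  exact (sq_eq_sq₀ (norm_nonneg _) (norm_nonneg _)).1 h2

theorem opnorm_eq {T P : H →L[ℂ] H} (h : Pack T P) : ‖T‖ = ‖P‖ :=
  ContinuousLinearMap.opNorm_ext _ _ (norm_eq h)

theorem capp {A B : H →L[ℂ] H} (h : Commute A B) (x : H) : A (B x) = B (A x) :=
  congrArg (fun S : H →L[ℂ] H => S x) h

theorem pow_norm_eq {T P : H →L[ℂ] H} (h : Pack T P) (n : ℕ) : ∀ x : H,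
    ‖(T ^ n) x‖ = ‖(P ^ n) x‖ := by
  induction n with
  | zero => simp
  | succ n ih =>
    intro x
    rw [pow_succ', pow_succ]
    simp only [mul_apply_eq_comp]
    rw [norm_eq h, capp (h.comm.pow_right n), ih]

theorem inj {T P : H →L[ℂ] H} (h : Pack T P) (hp : IsPure T) (x : H) (hx : T x = 0) : x = 0 := by
  have key : ∀ x, T x = 0 → T (adjoint T x) = 0 := by
    intro x hx
    have h1 : adjoint T (T (adjoint T x)) = 0 := by
      rw [h.sq, capp h.comm', capp h.comm', ← h.sq, hx]; simp
    have h2 : (inner ℂ (T (adjoint T x)) (T (adjoint T x)) : ℂ) = 0 := by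
      rw [← ContinuousLinearMap.adjoint_inner_left, h1]; simp
    exact inner_self_eq_zero.1 h2
  have := hp (LinearMap.ker (T : H →ₗ[ℂ] H)) (ContinuousLinearMap.isClosed_ker T)
    (by intro x hx
        have hx : T x = 0 := hx
        show T (T x) = 0
        simp [hx])
    (fun x hx => key x hx)
    (by intro x hx
        have hx : T x = 0 := hx
        rw [key x hx, hx]; simp)
  have hm : x ∈ LinearMap.ker (T : H →ₗ[ℂ] H) := hx
  rw [this] at hm
  simpa using hm

theorem pure_comm {T P : H →L[ℂ] H} (h : Pack T P) (hp : IsPure T) (S : H →L[ℂ] H)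
    (hS : ∀ x y, inner ℂ (S x) y = (inner ℂ x (S y) : ℂ)) (hc : Commute S T)
    (hc' : Commute S (adjoint T)) (h0 : ∀ k, adjoint T k = 0 → S k = 0) : S = 0 := by
  let N := LinearMap.ker (S : H →ₗ[ℂ] H)
  have hN : ∀ x, x ∈ N ↔ S x = 0 := fun x => Iff.rfl
  have hM : Nᗮ = ⊥ := by
    refine hp Nᗮ (Submodule.isClosed_orthogonal _) ?_ ?_ ?_
    · intro x hx
      rw [Submodule.mem_orthogonal] at hx ⊢
      intro u hu
      rw [← ContinuousLinearMap.adjoint_inner_left]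
      apply hx
      rw [hN] at hu ⊢
      rw [capp hc', hu]; simp
    · intro x hx
      rw [Submodule.mem_orthogonal] at hx ⊢
      intro u hu
      rw [ContinuousLinearMap.adjoint_inner_right]
      apply hx
      rw [hN] at hu ⊢
      rw [capp hc, hu]; simp
    · intro x hx
      rw [Submodule.mem_orthogonal] at hx
      apply ext_inner_left ℂ
      intro y
      have h1 : adjoint T (T (adjoint T y) - adjoint T (T y)) = 0 := by
        rw [map_sub, h.sq, h.sq, capp h.comm', capp h.comm']; simp
      have h2 := hx _ (h0 _ h1)
      rw [inner_sub_left] at h2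
      have h3 := sub_eq_zero.1 h2
      rw [← ContinuousLinearMap.adjoint_inner_left, ← ContinuousLinearMap.adjoint_inner_right] at *
      simp only [ContinuousLinearMap.adjoint_inner_left, ContinuousLinearMap.adjoint_inner_right]
        at h3 ⊢
      exact h3
  ext x
  have : S x ∈ Nᗮ := by
    rw [Submodule.mem_orthogonal]
    intro u hu
    rw [hN] at hu
    rw [← hS, hu]; simp
  rw [hM] at this
  simpa using this

/-- functional calculus facts -/
theorem cfc_sa (P : H →L[ℂ] H) (f : ℝ → ℝ) (x y : H) :
    inner ℂ (cfc f P x) y = (inner ℂ x (cfc f P y) : ℂ) := by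
  have h : IsSelfAdjoint (cfc f P) := cfc_predicate f P
  exact h.isSymmetric x y

theorem exists_g {T P : H →L[ℂ] H} (h : Pack T P) (hp : IsPure T) (b : ℝ) (hb : 0 < b)
    (hbP : b < ‖P‖) : ∃ (g : ℕ → H) (C : ℝ), g 0 ≠ 0 ∧ adjoint T (g 0) = 0 ∧
      (∀ n, adjoint T (g (n + 1)) = g n) ∧ (∀ n, ‖g n‖ ≤ C * (b⁻¹) ^ n) ∧
      ∀ n, ∃ z, g (n + 1) = T z := by
  have hsa : IsSelfAdjoint P := IsSelfAdjoint.of_nonneg h.nn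
  let ψ : ℕ → ℝ → ℝ := fun n t => max (t - b) 0 / (max t b) ^ (2 * n)
  have hmb : ∀ t : ℝ, 0 < max t b := fun t => lt_of_lt_of_le hb (le_max_right _ _)
  have hψc : ∀ n, Continuous (ψ n) := by
    intro n
    refine Continuous.div (by fun_prop) (by fun_prop) ?_
    intro t
    exact (pow_pos (hmb t) _).ne'
  have hψ : ∀ n t, t * (t * ψ (n + 1) t) = ψ n t := by
    intro n t
    simp only [ψ]
    rcases le_total t b with ht | ht
    · simp [max_eq_right (sub_nonpos.2 ht)]
    · rw [max_eq_left ht]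
      have : t ≠ 0 := (hb.trans_le ht).ne'
      rw [show 2 * (n + 1) = 2 * n + 2 by ring, pow_add]
      field_simp
  -- the cutoff is nonzero
  have hne : cfc (ψ 0) P ≠ 0 := by
    intro h0
    have h1 : cfc (fun t : ℝ => min t b + ψ 0 t) P = P := by
      have : (fun t : ℝ => min t b + ψ 0 t) = id := by
        funext t
        simp only [ψ, mul_zero, pow_zero, div_one, id]
        rcases le_total t b with ht | ht
        · simp [max_eq_right (sub_nonpos.2 ht), ht]
        · simp [max_eq_left (sub_nonneg.2 ht), ht]
      rw [this, cfc_id ℝ P]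
    rw [cfc_add (R := ℝ) P (fun t => min t b) (ψ 0) (by fun_prop) (hψc 0).continuousOn, h0,
      add_zero] at h1
    have h2 : ‖cfc (fun t : ℝ => min t b) P‖ ≤ b := by
      refine norm_cfc_le hb.le ?_
      intro t ht
      have : 0 ≤ t := spectrum_nonneg_of_nonneg h.nn ht
      rw [Real.norm_of_nonneg (le_min this hb.le)]
      exact min_le_right _ _
    rw [h1] at h2
    linarith
  have hk : ∃ k, adjoint T k = 0 ∧ cfc (ψ 0) P k ≠ 0 := by
    by_contra hcon
    push Not at hcon
    exact hne (pure_comm h hp _ (cfc_sa P _) (h.comm.cfc_real _) (h.comm'.cfc_real _) hcon)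
  obtain ⟨k, hk, hk0⟩ := hk
  refine ⟨fun n => (T ^ n) (cfc (ψ n) P k), ‖P‖ * ‖k‖, ?_, ?_, ?_, ?_, ?_⟩
  · simpa using hk0
  · simp only [pow_zero, one_apply_eq_self]
    rw [← capp (h.comm'.cfc_real _), hk]; simp
  · intro n
    have e : P * (P * cfc (ψ (n + 1)) P) = cfc (ψ n) P := by
      have e1 : cfc (ψ n) P = cfc (fun t : ℝ => id t * (id t * ψ (n + 1) t)) P := by
        congr 1; funext t; exact (hψ n t).symm
      rw [e1, cfc_mul (R := ℝ) id (fun t => id t * ψ (n + 1) t) P (by fun_prop)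
        ((continuous_id.mul (hψc _)).continuousOn),
        cfc_mul (R := ℝ) id (ψ (n + 1)) P (by fun_prop) (hψc _).continuousOn, cfc_id ℝ P]
    simp only
    rw [pow_succ', mul_apply_eq_comp, h.sq, capp (h.comm.pow_right n),
      capp (h.comm.pow_right n), ← e]
    rfl
  · intro n
    simp only
    rw [pow_norm_eq h]
    have e : (P ^ n) (cfc (ψ n) P k) = cfc (fun t : ℝ => t ^ n * ψ n t) P k := by
      rw [cfc_mul (R := ℝ) (fun t => t ^ n) (ψ n) P (by fun_prop) (hψc _).continuousOn,
        cfc_pow_id (R := ℝ) P n]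
      rfl
    rw [e]
    have h2 : ‖cfc (fun t : ℝ => t ^ n * ψ n t) P‖ ≤ ‖P‖ * (b⁻¹) ^ n := by
      refine norm_cfc_le (by positivity) ?_
      intro t ht
      have ht0 : 0 ≤ t := spectrum_nonneg_of_nonneg h.nn ht
      have ht1 : t ≤ ‖P‖ := by
        have : ‖(1 : H →L[ℂ] H)‖ ≤ 1 := ContinuousLinearMap.norm_id_le
        have h3 := spectrum.norm_le_norm_mul_of_mem ht
        rw [Real.norm_of_nonneg ht0] at h3
        nlinarith [norm_nonneg P]
      have hnn : 0 ≤ t ^ n * ψ n t := by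
        have := hmb t
        simp only [ψ]; positivity
      rw [Real.norm_of_nonneg hnn]
      simp only [ψ]
      rcases le_total t b with ht | ht
      · simp only [max_eq_right (sub_nonpos.2 ht), zero_div, mul_zero]; positivity
      · rw [max_eq_left ht, max_eq_left (sub_nonneg.2 ht)]
        have htp : 0 < t := hb.trans_le ht
        have e : t ^ n * ((t - b) / t ^ (2 * n)) = (t - b) * (t⁻¹) ^ n := by
          rw [two_mul, pow_add, inv_pow]; field_simp
        rw [e]
        gcongr
        linarith
    calc _ ≤ ‖cfc (fun t : ℝ => t ^ n * ψ n t) P‖ * ‖k‖ := ContinuousLinearMap.le_opNorm _ _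
      _ ≤ (‖P‖ * (b⁻¹) ^ n) * ‖k‖ := by gcongr
      _ = _ := by ring
  · intro n
    exact ⟨(T ^ n) (cfc (ψ (n + 1)) P k), by simp only [pow_succ']; rfl⟩

theorem mval_le {P : H →L[ℂ] H} (hpos : ∀ x, 0 ≤ (inner ℂ (P x) x).re) (x : H) :
    mval P * ‖x‖ ^ 2 ≤ (inner ℂ (P x) x).re := by
  rcases eq_or_ne x 0 with rfl | hx
  · simp
  have hx' : 0 < ‖x‖ := norm_pos_iff.2 hx
  have hbdd : BddBelow {r : ℝ | ∃ x : H, ‖x‖ = 1 ∧ r = P.reApplyInnerSelf x} := by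
    refine ⟨0, ?_⟩
    rintro r ⟨y, -, rfl⟩
    exact hpos y
  have h1 : mval P ≤ P.reApplyInnerSelf (((‖x‖⁻¹ : ℝ) : ℂ) • x) := by
    refine csInf_le hbdd ⟨_, ?_, rfl⟩
    rw [norm_smul]
    simp [hx'.ne']
  rw [ContinuousLinearMap.reApplyInnerSelf_smul] at h1
  have h2 : P.reApplyInnerSelf x = (inner ℂ (P x) x).re := rfl
  rw [h2] at h1
  have h3 : ‖((‖x‖⁻¹ : ℝ) : ℂ)‖ = ‖x‖⁻¹ := by simp
  rw [h3] at h1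
  calc mval P * ‖x‖ ^ 2 ≤ (‖x‖⁻¹ ^ 2 * (inner ℂ (P x) x).re) * ‖x‖ ^ 2 := by gcongr
    _ = _ := by field_simp

theorem le_mval [Nontrivial H] {P : H →L[ℂ] H} (a : ℝ)
    (ha : ∀ x, a * ‖x‖ ^ 2 ≤ (inner ℂ (P x) x).re) : a ≤ mval P := by
  obtain ⟨x, hx⟩ := exists_norm_eq H (zero_le_one)
  refine le_csInf ⟨_, x, hx, rfl⟩ ?_
  rintro r ⟨y, hy, rfl⟩
  have := ha y
  rw [hy, one_pow, mul_one] at this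
  exact this

theorem exists_f [Nontrivial H] {T P : H →L[ℂ] H} (h : Pack T P) (a : ℝ) (ha0 : 0 < a)
    (ha : mval P < a) :
    ∃ (f : H) (C : ℝ), f ≠ 0 ∧ ∀ n, ‖(T ^ n) f‖ ≤ C * a ^ n := by
  have hsa : IsSelfAdjoint P := IsSelfAdjoint.of_nonneg h.nn
  let φ : ℝ → ℝ := fun t => max (a - t) 0
  have hφc : Continuous φ := by fun_prop
  have hne : cfc φ P ≠ 0 := by
    intro h0
    have h1 : cfc (fun t : ℝ => max t a - φ t) P = P := by
      have : (fun t : ℝ => max t a - φ t) = id := by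
        funext t
        simp only [φ, id]
        rcases le_total t a with ht | ht
        · simp [max_eq_left (sub_nonneg.2 ht), ht]
        · simp [max_eq_right (sub_nonpos.2 ht), ht]
      rw [this, cfc_id ℝ P]
    rw [cfc_sub (R := ℝ) (fun t => max t a) φ P (by fun_prop) hφc.continuousOn, h0,
      sub_zero] at h1
    have h2 : algebraMap ℝ (H →L[ℂ] H) a ≤ cfc (fun t : ℝ => max t a) P :=
      algebraMap_le_cfc _ _ _ (fun t _ => le_max_right _ _) (by fun_prop)
    rw [h1, ContinuousLinearMap.le_def] at h2
    have h3 : a ≤ mval P := by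
      apply le_mval
      intro x
      have h4 := h2.2 x
      have h5 : (P - algebraMap ℝ (H →L[ℂ] H) a) x = P x - (a : ℂ) • x := by
        rw [Algebra.algebraMap_eq_smul_one]
        simp
      rw [ContinuousLinearMap.reApplyInnerSelf_apply, h5, inner_sub_left, inner_smul_left,
        inner_self_eq_norm_sq_to_K] at h4
      have h6 : (starRingEnd ℂ) (a : ℂ) * ((‖x‖ : ℂ)) ^ 2 = ((a * ‖x‖ ^ 2 : ℝ) : ℂ) := by
        simp
      simp only [map_sub] at h4
      have h7 : RCLike.re ((starRingEnd ℂ) (a : ℂ) * ((‖x‖ : ℂ)) ^ 2) = a * ‖x‖ ^ 2 := by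
        rw [h6]; exact Complex.ofReal_re _
      have h8 := h4
      erw [h7] at h8
      have h9 : RCLike.re (inner ℂ (P x) x) = (inner ℂ (P x) x).re := rfl
      rw [h9] at h8
      linarith
    linarith
  have hk : ∃ k, cfc φ P k ≠ 0 := by
    by_contra hcon
    push Not at hcon
    exact hne (by ext x; simpa using hcon x)
  obtain ⟨k, hk⟩ := hk
  refine ⟨cfc φ P k, a * ‖k‖, hk, ?_⟩
  intro n
  rw [pow_norm_eq h]
  have e : (P ^ n) (cfc φ P k) = cfc (fun t : ℝ => t ^ n * φ t) P k := by
    rw [cfc_mul (R := ℝ) (fun t => t ^ n) φ P (by fun_prop) hφc.continuousOn,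
      cfc_pow_id (R := ℝ) P n]
    rfl
  rw [e]
  have h2 : ‖cfc (fun t : ℝ => t ^ n * φ t) P‖ ≤ a * a ^ n := by
    refine norm_cfc_le (by positivity) ?_
    intro t ht
    have ht0 : 0 ≤ t := spectrum_nonneg_of_nonneg h.nn ht
    have hnn : 0 ≤ t ^ n * φ t := by
      simp only [φ]; positivity
    rw [Real.norm_of_nonneg hnn]
    simp only [φ]
    rcases le_total t a with ht | ht
    · rw [max_eq_left (sub_nonneg.2 ht), mul_comm]
      gcongr
      linarith
    · simp only [max_eq_right (sub_nonpos.2 ht), mul_zero]; positivity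
  calc _ ≤ ‖cfc (fun t : ℝ => t ^ n * φ t) P‖ * ‖k‖ := ContinuousLinearMap.le_opNorm _ _
    _ ≤ (a * a ^ n) * ‖k‖ := by gcongr
    _ = _ := by ring

theorem build (T : H →L[ℂ] H) (l : ℂ) (hl : l ≠ 0) (a b C D : ℝ) (ha : 0 < a) (hb : 0 < b)
    (hab : a < ‖l‖ * b) (g : ℕ → H) (f : H) (hg0 : g 0 ≠ 0) (hTg0 : adjoint T (g 0) = 0)
    (hTg : ∀ n, adjoint T (g (n + 1)) = g n) (hg : ∀ n, ‖g n‖ ≤ C * (b⁻¹) ^ n)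
    (hgr : ∀ n, ∃ z, g (n + 1) = T z) (hf0 : f ≠ 0) (hf : ∀ n, ‖(T ^ n) f‖ ≤ D * a ^ n) : l ∈ extSpectrum T := by
  have hl' : 0 < ‖l‖ := norm_pos_iff.2 hl
  let F : ℕ → (H →L[ℂ] H) := fun n => (l⁻¹ ^ n) • InnerProductSpace.rankOne ℂ ((T ^ n) f) (g n)
  have hFn : ∀ n y, F n y = (l⁻¹ ^ n * inner ℂ (g n) y) • (T ^ n) f := by
    intro n y
    simp [F, smul_smul]
  have hC : 0 ≤ C := by simpa using (norm_nonneg _).trans (hg 0)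
  have hD : 0 ≤ D := by simpa using (norm_nonneg _).trans (hf 0)
  have hsum : Summable F := by
    refine Summable.of_norm_bounded (g := fun n => (C * D) * (a / (‖l‖ * b)) ^ n) ?_ ?_
    · refine (summable_geometric_of_lt_one (by positivity) ?_).mul_left _
      rw [div_lt_one (by positivity)]; exact hab
    · intro n
      refine ContinuousLinearMap.opNorm_le_bound _ (by positivity) ?_
      intro y
      rw [hFn, norm_smul, norm_mul, norm_pow, norm_inv]
      calc ‖l‖⁻¹ ^ n * ‖(inner ℂ (g n) y : ℂ)‖ * ‖(T ^ n) f‖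
          ≤ ‖l‖⁻¹ ^ n * ((C * (b⁻¹) ^ n) * ‖y‖) * (D * a ^ n) := by
            gcongr
            · exact (norm_inner_le_norm _ _).trans (by gcongr; exact hg n)
            · exact hf n
        _ = _ := by
            rw [div_pow, mul_pow, inv_pow, inv_pow]; field_simp
  have hap : ∀ y, HasSum (fun n => F n y) ((∑' n, F n) y) := fun y =>
    hsum.hasSum.mapL (ContinuousLinearMap.apply ℂ H y)
  refine ⟨∑' n, F n, ?_, ?_⟩
  · intro h0
    have h1 := hap (g 0)
    rw [h0] at h1
    have h2 : HasSum (fun n => F n (g 0)) (F 0 (g 0)) := by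
      apply hasSum_single
      intro n hn
      obtain ⟨m, rfl⟩ := Nat.exists_eq_succ_of_ne_zero hn
      have : (inner ℂ (g (m + 1)) (g 0) : ℂ) = 0 := by
        obtain ⟨z, hz⟩ := hgr m
        rw [hz, ← ContinuousLinearMap.adjoint_inner_right, hTg0]; simp
      rw [hFn, Nat.succ_eq_add_one, this]; simp
    have h3 := h1.unique h2
    rw [hFn] at h3
    have h4 : (l⁻¹ ^ 0 * inner ℂ (g 0) (g 0) : ℂ) ≠ 0 := by
      rw [pow_zero, one_mul]; exact inner_self_ne_zero.2 hg0
    exact smul_ne_zero h4 hf0 h3.symm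
  · ext y
    have h1 : HasSum (fun n => T (F n y)) (T ((∑' n, F n) y)) := (hap y).mapL T
    have h2 : HasSum (fun n => l • F n (T y)) (l • (∑' n, F n) (T y)) := (hap (T y)).const_smul l
    have h3 : l • F 0 (T y) = 0 := by
      rw [hFn, ← ContinuousLinearMap.adjoint_inner_left, hTg0]; simp
    rw [← hasSum_nat_add_iff' 1] at h2
    simp only [Finset.sum_range_one, h3, sub_zero] at h2
    have h4 : (fun n => l • F (n + 1) (T y)) = fun n => T (F n y) := by
      funext n
      rw [hFn, hFn, ← ContinuousLinearMap.adjoint_inner_left, hTg, map_smul, smul_smul, pow_succ',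
        pow_succ' T]
      simp only [mul_apply_eq_comp]
      congr 1
      field_simp
    rw [h4] at h2
    exact h1.unique h2

theorem low {T P : H →L[ℂ] H} (h : Pack T P) (y : H) : mval P * ‖y‖ ≤ ‖P y‖ := by
  rcases eq_or_ne y 0 with rfl | hy
  · simp
  have hy' : 0 < ‖y‖ := norm_pos_iff.2 hy
  have h1 := mval_le h.pos y
  have h2 : (inner ℂ (P y) y).re ≤ ‖P y‖ * ‖y‖ := re_inner_le_norm (𝕜 := ℂ) (P y) y
  nlinarith

theorem low_pow {T P : H →L[ℂ] H} (h : Pack T P) (hm : 0 ≤ mval P) (y : H) (n : ℕ) :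
    mval P ^ n * ‖y‖ ≤ ‖(P ^ n) y‖ := by
  induction n with
  | zero => simp
  | succ n ih =>
    rw [pow_succ', pow_succ' P, mul_apply_eq_comp]
    have := low h ((P ^ n) y)
    nlinarith

theorem eig_of_bdd {T P : H →L[ℂ] H} (h : Pack T P) (hm : 0 < mval P) (y : H) (hy : y ≠ 0)
    (C : ℝ) (hC : ∀ n, ‖(P ^ n) y‖ ≤ C * mval P ^ n) : P y = (mval P : ℂ) • y := by
  have hy' : 0 < ‖y‖ := norm_pos_iff.2 hy
  set m := mval P with hmdef
  have hpos : ∀ n, 0 < ‖(P ^ n) y‖ := fun n =>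
    lt_of_lt_of_le (by positivity) (low_pow h hm.le y n)
  have hconv : ∀ n, ‖(P ^ (n + 1)) y‖ ^ 2 ≤ ‖(P ^ n) y‖ * ‖(P ^ (n + 2)) y‖ := by
    intro n
    rw [pow_succ' P (n + 1), pow_succ' P n]
    simp only [mul_apply_eq_comp]
    have h1 : (inner ℂ (P ((P ^ n) y)) (P ((P ^ n) y)) : ℂ)
        = inner ℂ ((P ^ n) y) (P (P ((P ^ n) y))) := h.sa _ _
    have h2 : ‖(inner ℂ (P ((P ^ n) y)) (P ((P ^ n) y)) : ℂ)‖ = ‖P ((P ^ n) y)‖ ^ 2 := by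
      rw [inner_self_eq_norm_sq_to_K]; simp
    rw [← h2, h1]
    exact norm_inner_le_norm _ _
  set r := ‖P y‖ / ‖y‖ with hr
  have hr0 : 0 ≤ r := by positivity
  have hstep : ∀ n, r * ‖(P ^ n) y‖ ≤ ‖(P ^ (n + 1)) y‖ := by
    intro n
    induction n with
    | zero =>
      simp only [pow_zero, one_apply_eq_self, zero_add, pow_one, hr]
      rw [div_mul_cancel₀ _ hy'.ne']
    | succ n ih =>
      have h1 := hconv n
      have h2 := hpos n
      have h3 := hpos (n + 1)
      have h4 : ‖(P ^ n) y‖ * (r * ‖(P ^ (n + 1)) y‖) ≤ ‖(P ^ n) y‖ * ‖(P ^ (n + 2)) y‖ := by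
        nlinarith
      exact le_of_mul_le_mul_left h4 h2
  have hgeo : ∀ n, r ^ n * ‖y‖ ≤ ‖(P ^ n) y‖ := by
    intro n
    induction n with
    | zero => simp
    | succ n ih =>
      rw [pow_succ']
      calc r * r ^ n * ‖y‖ = r * (r ^ n * ‖y‖) := by ring
        _ ≤ r * ‖(P ^ n) y‖ := by gcongr
        _ ≤ _ := hstep n
  have hrm : r ≤ m := by
    by_contra hcon
    push Not at hcon
    have h1 : 1 < r / m := (one_lt_div hm).2 hcon
    obtain ⟨n, hn⟩ := pow_unbounded_of_one_lt (C / ‖y‖) h1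
    have h2 := (hgeo n).trans (hC n)
    rw [div_pow, div_lt_div_iff₀ hy' (by positivity)] at hn
    linarith
  have hPy : ‖P y‖ ≤ m * ‖y‖ := (div_le_iff₀ hy').1 hrm
  have h1 := mval_le h.pos y
  have h2 : ‖P y - (m : ℂ) • y‖ ^ 2
      = ‖P y‖ ^ 2 - 2 * (m * (inner ℂ (P y) y).re) + m ^ 2 * ‖y‖ ^ 2 := by
    rw [@norm_sub_sq ℂ, inner_smul_right, norm_smul]
    simp [mul_pow]
  have h3 : ‖P y‖ ^ 2 ≤ (m * ‖y‖) ^ 2 := by gcongr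
  have h4 : ‖P y - (m : ℂ) • y‖ ^ 2 ≤ 0 := by
    rw [h2]; nlinarith
  have h5 : ‖P y - (m : ℂ) • y‖ = 0 := by
    have := sq_nonneg ‖P y - (m : ℂ) • y‖
    exact pow_eq_zero_iff (two_ne_zero) |>.1 (le_antisymm h4 this)
  exact sub_eq_zero.1 (norm_eq_zero.1 h5)

theorem tend_zero (Q : H →L[ℂ] H) (hsa : ∀ x y, inner ℂ (Q x) y = (inner ℂ x (Q y) : ℂ))
    (hpos : ∀ x, 0 ≤ (inner ℂ (Q x) x).re) (hc : ∀ x, ‖Q x‖ ≤ ‖x‖)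
    (hno : ∀ z, Q z = z → z = 0) (x : H) : Tendsto (fun n => (Q ^ (2 * n)) x) atTop (𝓝 0) := by
  set s : ℕ → ℝ := fun n => ‖(Q ^ n) x‖ ^ 2 with hs
  have hanti : Antitone s := by
    apply antitone_nat_of_succ_le
    intro n
    simp only [hs, pow_succ' Q, mul_apply_eq_comp]
    gcongr
    exact hc _
  have hbd : BddBelow (Set.range s) := ⟨0, by rintro _ ⟨n, rfl⟩; simp only [hs]; positivity⟩
  have hlim := tendsto_atTop_ciInf hanti hbd
  set L := ⨅ i, s i with hL
  have hLle : ∀ n, L ≤ s n := fun n => ciInf_le hbd n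
  have hsap : ∀ k x y, inner ℂ ((Q ^ k) x) y = (inner ℂ x ((Q ^ k) y) : ℂ) := by
    intro k
    induction k with
    | zero => simp
    | succ k ih =>
      intro x y
      rw [pow_succ, mul_apply_eq_comp, ih, hsa, ← mul_apply_eq_comp, ← pow_succ', ← pow_succ]
  have hin : ∀ n m, (inner ℂ ((Q ^ (2 * n)) x) ((Q ^ (2 * m)) x) : ℂ) = (s (n + m) : ℝ) := by
    intro n m
    have e : ((Q ^ (2 * m)) x : H) = (Q ^ m) ((Q ^ m) x) := by
      rw [two_mul, pow_add]; rfl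
    have e2 : ((Q ^ m) ((Q ^ (2 * n)) x) : H) = (Q ^ n) ((Q ^ (n + m)) x) := by
      rw [← mul_apply_eq_comp, ← mul_apply_eq_comp, ← pow_add, ← pow_add]
      congr 2; ring
    have e3 : ((Q ^ n) ((Q ^ m) x) : H) = (Q ^ (n + m)) x := by
      rw [← mul_apply_eq_comp, ← pow_add]
    rw [e, ← hsap, e2, hsap, e3, inner_self_eq_norm_sq_to_K]
    simp [hs]
  have hdist : ∀ n m, dist ((Q ^ (2 * n)) x) ((Q ^ (2 * m)) x) ^ 2
      = s (2 * n) - 2 * s (n + m) + s (2 * m) := by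
    intro n m
    rw [dist_eq_norm, @norm_sub_sq ℂ, hin]
    have : RCLike.re ((s (n + m) : ℝ) : ℂ) = s (n + m) := Complex.ofReal_re _
    erw [this]
  have hcau : CauchySeq (fun n => (Q ^ (2 * n)) x) := by
    refine cauchySeq_of_le_tendsto_0 (fun N => Real.sqrt (2 * (s (2 * N) - L))) ?_ ?_
    · intro n m N hn hm
      apply Real.le_sqrt_of_sq_le
      rw [hdist]
      have h1 : s (2 * n) ≤ s (2 * N) := hanti (by omega)
      have h2 : s (2 * m) ≤ s (2 * N) := hanti (by omega)
      have h3 := hLle (n + m)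
      linarith
    · have h2 : Tendsto (fun N : ℕ => 2 * N) atTop atTop :=
        tendsto_id.const_mul_atTop' (by norm_num)
      have h3 : Tendsto (fun N => Real.sqrt (2 * (s (2 * N) - L))) atTop
          (𝓝 (Real.sqrt (2 * (L - L)))) :=
        (((hlim.comp h2).sub_const L).const_mul 2).sqrt
      simpa using h3
  obtain ⟨z, hz⟩ := cauchySeq_tendsto_of_complete hcau
  have hQQ : Q (Q z) = z := by
    have h1 : Tendsto (fun n => Q (Q ((Q ^ (2 * n)) x))) atTop (𝓝 (Q (Q z))) :=
      ((Q.continuous.comp Q.continuous).tendsto z).comp hz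
    have h2 := (tendsto_add_atTop_iff_nat 1).2 hz
    have h3 : (fun n => Q (Q ((Q ^ (2 * n)) x))) = fun n => (Q ^ (2 * (n + 1))) x := by
      funext n
      rw [show 2 * (n + 1) = 2 * n + 1 + 1 by ring, pow_succ', pow_succ']
      rfl
    rw [h3] at h1
    exact tendsto_nhds_unique h1 h2
  have hw : Q z - z = 0 := by
    have h1 : Q (Q z - z) = -(Q z - z) := by rw [map_sub, hQQ]; abel
    have h2 := hpos (Q z - z)
    rw [h1, inner_neg_left, inner_self_eq_norm_sq_to_K] at h2
    have h3 : ((-(((‖Q z - z‖ : ℝ) : ℂ)) ^ 2 : ℂ)).re = - ‖Q z - z‖ ^ 2 := by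
      rw [← Complex.ofReal_pow, ← Complex.ofReal_neg, Complex.ofReal_re]
    erw [h3] at h2
    have h4 : ‖Q z - z‖ = 0 := by
      have := sq_nonneg ‖Q z - z‖
      exact pow_eq_zero_iff (two_ne_zero) |>.1 (by linarith)
    exact norm_eq_zero.1 h4
  have hz0 := hno z (sub_eq_zero.1 hw)
  rw [hz0] at hz
  exact hz

theorem forward {T P : H →L[ℂ] H} (h : Pack T P) (hp : IsPure T) (hm0 : 0 ≤ mval P)
    (hc : 0 < ‖P‖)
    (heig : ¬ ((∃ x : H, x ≠ 0 ∧ P x = (mval P : ℂ) • x) ∧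
      (∃ x : H, x ≠ 0 ∧ P x = (‖P‖ : ℂ) • x))) (l : ℂ) (hl : l ∈ extSpectrum T) :
    mval P / ‖P‖ < ‖l‖ := by
  by_contra hcon
  push Not at hcon
  obtain ⟨X, hX, hTX⟩ := hl
  have hTX' : ∀ x, T (X x) = l • X (T x) := fun x => congrArg (fun S : H →L[ℂ] H => S x) hTX
  obtain ⟨x, hx⟩ : ∃ x, X x ≠ 0 := by
    by_contra hno
    push Not at hno
    exact hX (by ext x; simpa using hno x)
  have hn : ∀ n x, (T ^ n) (X x) = l ^ n • X ((T ^ n) x) := by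
    intro n
    induction n with
    | zero => simp
    | succ n ih =>
      intro x
      rw [pow_succ, mul_apply_eq_comp, hTX', map_smul, ih, smul_smul, ← pow_succ']
      rfl
  rcases hm0.eq_or_lt with hm | hm
  · rw [← hm, zero_div] at hcon
    have : l = 0 := norm_eq_zero.1 (le_antisymm hcon (norm_nonneg _))
    apply hx
    apply inj h hp
    rw [hTX', this, zero_smul]
  have hb : ∀ n, ‖(P ^ n) (X x)‖ ≤ (mval P / ‖P‖) ^ n * (‖X‖ * ‖(P ^ n) x‖) := by
    intro n
    rw [← pow_norm_eq h, hn, norm_smul, norm_pow, ← pow_norm_eq h]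
    gcongr
    exact X.le_opNorm _
  have he := eig_of_bdd h hm (X x) hx (‖X‖ * ‖x‖) (by
    intro n
    refine (hb n).trans ?_
    have h1 : ‖(P ^ n) x‖ ≤ ‖P‖ ^ n * ‖x‖ := by
      induction n with
      | zero => simp
      | succ n ih =>
        rw [pow_succ', mul_apply_eq_comp, pow_succ']
        calc _ ≤ ‖P‖ * ‖(P ^ n) x‖ := P.le_opNorm _
          _ ≤ ‖P‖ * (‖P‖ ^ n * ‖x‖) := by gcongr
          _ = _ := by ring
    calc _ ≤ (mval P / ‖P‖) ^ n * (‖X‖ * (‖P‖ ^ n * ‖x‖)) := by gcongr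
      _ = _ := by rw [div_pow]; field_simp)
  have hno : ∀ z, P z = (‖P‖ : ℂ) • z → z = 0 := by
    intro z hz
    by_contra hz0
    exact heig ⟨⟨_, hx, he⟩, ⟨z, hz0, hz⟩⟩
  have hcC : (‖P‖ : ℂ) ≠ 0 := by exact_mod_cast hc.ne'
  have hre : ((‖P‖ : ℂ)⁻¹) = ((‖P‖⁻¹ : ℝ) : ℂ) := by simp
  have ht := tend_zero (((‖P‖ : ℂ)⁻¹) • P)
    (by intro x y
        simp only [ContinuousLinearMap.smul_apply, inner_smul_left, inner_smul_right, h.sa]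
        simp)
    (by intro x
        simp only [ContinuousLinearMap.smul_apply, inner_smul_left]
        rw [hre, Complex.conj_ofReal, Complex.re_ofReal_mul]
        exact mul_nonneg (by positivity) (h.pos x))
    (by intro x
        rw [ContinuousLinearMap.smul_apply, norm_smul, hre, Complex.norm_real,
          Real.norm_of_nonneg (by positivity), inv_mul_le_iff₀ hc]
        exact P.le_opNorm x)
    (by intro z hz
        apply hno
        rw [ContinuousLinearMap.smul_apply] at hz
        calc P z = (‖P‖ : ℂ) • ((‖P‖ : ℂ)⁻¹ • P z) := by rw [smul_smul, mul_inv_cancel₀ hcC, one_smul]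
          _ = _ := by rw [hz]) x
  have ht2 := (ht.norm).const_mul ‖X‖
  rw [norm_zero, mul_zero] at ht2
  have hxp : 0 < ‖X x‖ := norm_pos_iff.2 hx
  obtain ⟨n, hn2⟩ := (ht2.eventually (gt_mem_nhds hxp)).exists
  have h1 := (low_pow h hm.le (X x) (2 * n)).trans (hb (2 * n))
  have h2 : ‖((((‖P‖ : ℂ)⁻¹) • P) ^ (2 * n)) x‖ = (‖P‖⁻¹) ^ (2 * n) * ‖(P ^ (2 * n)) x‖ := by
    rw [smul_pow, ContinuousLinearMap.smul_apply, norm_smul, norm_pow, norm_inv, Complex.norm_real,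
      norm_norm]
  rw [h2] at hn2
  have h3 : (mval P / ‖P‖) ^ (2 * n) * (‖X‖ * ‖(P ^ (2 * n)) x‖)
      = mval P ^ (2 * n) * (‖X‖ * ((‖P‖⁻¹) ^ (2 * n) * ‖(P ^ (2 * n)) x‖)) := by
    rw [div_eq_mul_inv, mul_pow]; ring
  rw [h3] at h1
  have h4 := le_of_mul_le_mul_left h1 (by positivity)
  linarith

end PQ

theorem extSpectrum_pure_quasinormal_of_not_eigenvalues
    {H : Type*} [NormedAddCommGroup H] [InnerProductSpace ℂ H] [CompleteSpace H] [Nontrivial H]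
    (T : H →L[ℂ] H) (hTqn : IsQuasinormal T) (hTpure : IsPure T)
    (heig : ¬ ((∃ x : H, x ≠ 0 ∧ modulus T x = (mval (modulus T) : ℂ) • x) ∧
      (∃ x : H, x ≠ 0 ∧ modulus T x = (‖T‖ : ℂ) • x))) :
    extSpectrum T = {l : ℂ | mval (modulus T) / ‖T‖ < ‖l‖} := by
  have h := PQ.pack T hTqn
  rw [PQ.opnorm_eq h] at heig ⊢
  have hm0 : 0 ≤ mval (modulus T) := PQ.le_mval 0 (by simpa using h.pos)
  have hc : 0 < ‖modulus T‖ := by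
    rw [← PQ.opnorm_eq h, norm_pos_iff]
    intro h0
    obtain ⟨x, hx⟩ := exists_ne (0 : H)
    exact hx (PQ.inj h hTpure x (by rw [h0]; simp))
  ext l
  refine ⟨PQ.forward h hTpure hm0 hc heig l, ?_⟩
  intro hl
  have hl : mval (modulus T) / ‖modulus T‖ < ‖l‖ := hl
  have hlp : 0 < ‖l‖ := lt_of_le_of_lt (by positivity) hl
  have h1 : mval (modulus T) / ‖l‖ < ‖modulus T‖ := by
    rw [div_lt_iff₀ hc] at hl
    rw [div_lt_iff₀ hlp]
    linarith
  obtain ⟨b, hb1, hb2⟩ := exists_between h1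
  have hb : 0 < b := lt_of_le_of_lt (by positivity) hb1
  rw [div_lt_iff₀ hlp, mul_comm] at hb1
  obtain ⟨a, ha1, ha2⟩ := exists_between hb1
  have ha : 0 < a := lt_of_le_of_lt hm0 ha1
  obtain ⟨g, C, hg0, hTg0, hTg, hg, hgr⟩ := PQ.exists_g h hTpure b hb hb2
  obtain ⟨f, D, hf0, hf⟩ := PQ.exists_f h a ha ha1
  exact PQ.build T l (norm_pos_iff.1 hlp) a b C D ha hb ha2 g f hg0 hTg0 hTg hg hgr hf0 hf
end

section
/- Let 𝔏 be a complex Hilbert space, A an invertible positive bounded operator on 𝔏, T = A⊗S on ℓ²(ℕ,𝔏), and λ an extended eigenvalue of T. Then E_ext(T,λ) equals the closure, in the weak operator topology of the bounded operators on ℓ²(ℕ,𝔏) (which for convex sets coincides with the weak-* closure), of the linear span of the operators (I⊗Sᵐ)∘D_{A,L,λ} over m ∈ ℕ and L ∈ 𝒜_{|λ|}(A), where I⊗Sᵐ is the m-fold shift, ((I⊗Sᵐ)x)_{k+m} = x_k and ((I⊗Sᵐ)x)_j = 0 for j < m, and D_{A,L,λ} is the (bounded, since L ∈ 𝒜_{|λ|}(A)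 and A is invertible) diagonal operator (D_{A,L,λ}x)ₙ = λ^{-n}·Aⁿ L A^{-n} xₙ. -/
section Helpers

set_option linter.unusedSectionVars false

open Filter Topology

variable {𝔏 : Type*} [NormedAddCommGroup 𝔏] [InnerProductSpace ℂ 𝔏]

lemma ell_sum_sq_le (f : lp (fun _ : ℕ => 𝔏) 2) (s : Finset ℕ) :
    ∑ i ∈ s, ‖f i‖ ^ 2 ≤ ‖f‖ ^ 2 := by
  have h := lp.sum_rpow_le_norm_rpow (p := 2) (by norm_num) f s
  simpa using h

lemma ell_norm_le {C : ℝ} (hC : 0 ≤ C) (f : lp (fun _ : ℕ => 𝔏) 2)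
    (h : ∀ s : Finset ℕ, ∑ i ∈ s, ‖f i‖ ^ 2 ≤ C ^ 2) : ‖f‖ ≤ C := by
  refine lp.norm_le_of_forall_sum_le (p := 2) (by norm_num) hC ?_
  simpa using h

lemma ell_norm_sum_single (f : ℕ → 𝔏) (s : Finset ℕ) :
    ‖∑ i ∈ s, (lp.single 2 i (f i) : lp (fun _ : ℕ => 𝔏) 2)‖ ^ 2 = ∑ i ∈ s, ‖f i‖ ^ 2 := by
  have h := lp.norm_sum_single (E := fun _ : ℕ => 𝔏) (p := 2) (by norm_num) f s
  simpa using h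

lemma ell_norm_entry_le (X : lp (fun _ : ℕ => 𝔏) 2 →L[ℂ] lp (fun _ : ℕ => 𝔏) 2)
    (j n : ℕ) (v : 𝔏) : ‖X (lp.single 2 j v) n‖ ≤ ‖X‖ * ‖v‖ := by
  refine (lp.norm_apply_le_norm (by norm_num) _ n).trans ((X.le_opNorm _).trans ?_)
  rw [lp.norm_single (by norm_num)]

/-- The `m`-th diagonal of an operator matrix. -/
lemma exists_diag (X : lp (fun _ : ℕ => 𝔏) 2 →L[ℂ] lp (fun _ : ℕ => 𝔏) 2) (m : ℕ) :
    ∃ D : lp (fun _ : ℕ => 𝔏) 2 →L[ℂ] lp (fun _ : ℕ => 𝔏) 2, ∀ x n,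
      D x n = if m ≤ n then X (lp.single 2 (n - m) (x (n - m))) n else 0 := by
  let F : lp (fun _ : ℕ => 𝔏) 2 → ℕ → 𝔏 := fun x n =>
    if m ≤ n then X (lp.single 2 (n - m) (x (n - m))) n else 0
  have hF : ∀ x (s : Finset ℕ), ∑ n ∈ s, ‖F x n‖ ^ 2 ≤ (‖X‖ * ‖x‖) ^ 2 := by
    intro x s
    have h1 : ∑ n ∈ s, ‖F x n‖ ^ 2
        ≤ ∑ n ∈ s.filter (m ≤ ·), ‖X‖ ^ 2 * ‖x (n - m)‖ ^ 2 := by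
      rw [Finset.sum_filter]
      refine Finset.sum_le_sum fun n _ => ?_
      by_cases h : m ≤ n
      · simp only [F, h, if_true]
        rw [← mul_pow]
        gcongr
        exact ell_norm_entry_le X _ _ _
      · simp [F, h]
    have h2 : ∑ n ∈ s.filter (m ≤ ·), ‖X‖ ^ 2 * ‖x (n - m)‖ ^ 2
        = ‖X‖ ^ 2 * ∑ k ∈ (s.filter (m ≤ ·)).image (· - m), ‖x k‖ ^ 2 := by
      rw [Finset.sum_image, Finset.mul_sum]
      intro a ha b hb hab
      simp at ha hb hab
      omega
    rw [h2] at h1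
    refine h1.trans ?_
    rw [mul_pow]
    gcongr
    exact ell_sum_sq_le x _
  have hmem : ∀ x, Memℓp (F x) 2 := fun x => memℓp_gen' (C := (‖X‖ * ‖x‖) ^ 2) (by
    simpa using hF x)
  let G : lp (fun _ : ℕ => 𝔏) 2 →ₗ[ℂ] lp (fun _ : ℕ => 𝔏) 2 :=
    { toFun := fun x => ⟨F x, hmem x⟩
      map_add' := by
        intro x y
        apply Subtype.ext
        funext n
        change F (x + y) n = F x n + F y n
        by_cases h : m ≤ n
        · simp [F, h, lp.single_add]
        · simp [F, h]
      map_smul' := by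
        intro c x
        apply Subtype.ext
        funext n
        change F (c • x) n = c • F x n
        by_cases h : m ≤ n
        · simp [F, h, lp.single_smul]
        · simp [F, h] }
  refine ⟨G.mkContinuous ‖X‖ fun x => ?_, fun x n => rfl⟩
  exact ell_norm_le (by positivity) _ (hF x)

lemma fejer_sum (a : ℕ → 𝔏) (n N : ℕ) (ha : ∀ j, n < j → a j = 0) :
    ∑ s ∈ Finset.Ico n (n + N), ∑ j ∈ Finset.Ico (s + 1 - N) (s + 1), a j
      = ∑ m ∈ Finset.range N, (N - m) • (if m ≤ n then a (n - m) else 0) := by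
  have h1 : ∑ s ∈ Finset.Ico n (n + N), ∑ j ∈ Finset.Ico (s + 1 - N) (s + 1), a j
      = ∑ j ∈ Finset.range (n + N), ∑ s ∈ Finset.Ico (max n j) (min (n + N) (j + N)), a j := by
    refine Finset.sum_comm' ?_
    intro s j
    simp
    omega
  have h2 : ∑ j ∈ Finset.range (n + N), ∑ s ∈ Finset.Ico (max n j) (min (n + N) (j + N)), a j
      = ∑ j ∈ Finset.range (n + 1), (j + N - n) • a j := by
    simp only [Finset.sum_const, Nat.card_Ico]
    have : ∀ j, (min (n + N) (j + N) - max n j) • a j = (j + N - n) • a j := by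
      intro j
      by_cases h : n < j
      · simp [ha j h]
      · congr 1; omega
    simp only [this]
    rcases Nat.eq_zero_or_pos N with h0 | h0
    · subst h0
      rw [Finset.sum_eq_zero, Finset.sum_eq_zero]
      · intro j hj; simp at hj
        have : j + 0 - n = 0 := by omega
        rw [this, zero_smul]
      · intro j hj; simp at hj
        have : j + 0 - n = 0 := by omega
        rw [this, zero_smul]
    · symm
      refine Finset.sum_subset ?_ ?_
      · intro j; simp; omega
      · intro j _ hj
        simp at hj
        simp [ha j (by omega)]
  rw [h1, h2, ← Finset.sum_range_reflect]
  have h3 : ∀ K, max N (n+1) ≤ K → ∑ m ∈ Finset.range N, (N - m) • (if m ≤ n then a (n - m) else 0)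
      = ∑ m ∈ Finset.range K, (N - m) • (if m ≤ n then a (n - m) else 0) := by
    intro K hK
    refine Finset.sum_subset ?_ ?_
    · intro j; simp; omega
    · intro j _ hj
      simp at hj
      have : N - j = 0 := by omega
      simp [this]
  rw [h3 _ le_rfl]
  have h4 : ∑ m ∈ Finset.range (n + 1), (N - m) • (if m ≤ n then a (n - m) else 0)
      = ∑ m ∈ Finset.range (max N (n + 1)), (N - m) • (if m ≤ n then a (n - m) else 0) := by
    refine Finset.sum_subset ?_ ?_
    · intro j; simp; omega
    · intro j _ hj
      simp at hj
      simp [show ¬ j ≤ n by omega]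
  rw [← h4]
  refine Finset.sum_congr rfl fun m hm => ?_
  simp at hm
  rw [if_pos (by omega)]
  congr 1
  omega

/-- The Fejér means of a lower triangular operator matrix are bounded by its norm. -/
lemma fejer_bound (X : lp (fun _ : ℕ => 𝔏) 2 →L[ℂ] lp (fun _ : ℕ => 𝔏) 2)
    (hX : ∀ j n v, n < j → X (lp.single 2 j v) n = 0)
    (N : ℕ) (hN : 0 < N) (x z : lp (fun _ : ℕ => 𝔏) 2)
    (hz : ∀ n, (N : ℂ) • z n = ∑ m ∈ Finset.range N, (N - m) •
      (if m ≤ n then X (lp.single 2 (n - m) (x (n - m))) n else 0)) :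
    ‖z‖ ≤ ‖X‖ * ‖x‖ := by
  let Q : ℕ → lp (fun _ : ℕ => 𝔏) 2 := fun s =>
    ∑ j ∈ Finset.Ico (s + 1 - N) (s + 1), lp.single 2 j (x j)
  have hQ : ∀ s, ‖Q s‖ ^ 2 = ∑ j ∈ Finset.Ico (s + 1 - N) (s + 1), ‖x j‖ ^ 2 := fun s =>
    ell_norm_sum_single (fun j => x j) _
  have hN' : (0 : ℝ) < N := by exact_mod_cast hN
  have hz2 : ∀ n, (N : ℂ) • z n = ∑ s ∈ Finset.Ico n (n + N), X (Q s) n := by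
    intro n
    rw [hz n, ← fejer_sum (fun j => X (lp.single 2 j (x j)) n) n N (fun j hj => hX _ _ _ hj)]
    refine Finset.sum_congr rfl fun s _ => ?_
    simp only [Q, map_sum, lp.coeFn_sum, Finset.sum_apply]
  have hz3 : ∀ n, N * ‖z n‖ ^ 2 ≤ ∑ s ∈ Finset.Ico n (n + N), ‖X (Q s) n‖ ^ 2 := by
    intro n
    have h1 : (N : ℝ) * ‖z n‖ ≤ ∑ s ∈ Finset.Ico n (n + N), ‖X (Q s) n‖ := by
      have := congrArg norm (hz2 n)
      rw [norm_smul] at this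
      simp only [Complex.norm_natCast] at this
      rw [this]
      exact norm_sum_le _ _
    have h2 := sq_sum_le_card_mul_sum_sq (s := Finset.Ico n (n + N)) (f := fun s => ‖X (Q s) n‖)
    simp only [Nat.card_Ico, Nat.add_sub_cancel_left] at h2
    have h3 : ((N : ℝ) * ‖z n‖) ^ 2 ≤ N * ∑ s ∈ Finset.Ico n (n + N), ‖X (Q s) n‖ ^ 2 :=
      (pow_le_pow_left₀ (by positivity) h1 2).trans h2
    have h4 : (N : ℝ) * (N * ‖z n‖ ^ 2) ≤ N * ∑ s ∈ Finset.Ico n (n + N), ‖X (Q s) n‖ ^ 2 := by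
      calc _ = ((N : ℝ) * ‖z n‖) ^ 2 := by ring
        _ ≤ _ := h3
    exact le_of_mul_le_mul_left h4 hN'
  refine ell_norm_le (by positivity) z fun F => ?_
  obtain ⟨M, hM⟩ := F.exists_nat_subset_range
  have h5 : ∑ n ∈ F, ‖z n‖ ^ 2 ≤ ∑ n ∈ Finset.range M, ‖z n‖ ^ 2 :=
    Finset.sum_le_sum_of_subset_of_nonneg hM fun _ _ _ => by positivity
  refine h5.trans (le_of_mul_le_mul_left ?_ hN')
  calc (N : ℝ) * ∑ n ∈ Finset.range M, ‖z n‖ ^ 2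
      = ∑ n ∈ Finset.range M, N * ‖z n‖ ^ 2 := Finset.mul_sum _ _ _
    _ ≤ ∑ n ∈ Finset.range M, ∑ s ∈ Finset.Ico n (n + N), ‖X (Q s) n‖ ^ 2 :=
        Finset.sum_le_sum fun n _ => hz3 n
    _ ≤ ∑ n ∈ Finset.range M, ∑ s ∈ Finset.range (M + N), ‖X (Q s) n‖ ^ 2 := by
        refine Finset.sum_le_sum fun n hn => ?_
        refine Finset.sum_le_sum_of_subset_of_nonneg ?_ fun _ _ _ => by positivity
        intro s
        simp at hn ⊢
        omega
    _ = ∑ s ∈ Finset.range (M + N), ∑ n ∈ Finset.range M, ‖X (Q s) n‖ ^ 2 := Finset.sum_comm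
    _ ≤ ∑ s ∈ Finset.range (M + N), ‖X‖ ^ 2 * ‖Q s‖ ^ 2 := by
        refine Finset.sum_le_sum fun s _ => (ell_sum_sq_le _ _).trans ?_
        rw [← mul_pow]
        gcongr
        exact X.le_opNorm _
    _ = ‖X‖ ^ 2 * ∑ s ∈ Finset.range (M + N), ∑ j ∈ Finset.Ico (s + 1 - N) (s + 1), ‖x j‖ ^ 2 := by
        rw [Finset.mul_sum]
        simp only [hQ]
    _ = ‖X‖ ^ 2 * ∑ j ∈ Finset.range (M + N), ∑ s ∈ Finset.Ico j (min (M + N) (j + N)),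
          ‖x j‖ ^ 2 := by
        congr 1
        refine Finset.sum_comm' ?_
        intro s j
        simp
        omega
    _ ≤ ‖X‖ ^ 2 * ∑ j ∈ Finset.range (M + N), N * ‖x j‖ ^ 2 := by
        gcongr with j hj
        simp only [Finset.sum_const, Nat.card_Ico, nsmul_eq_mul]
        gcongr
        omega
    _ = N * (‖X‖ ^ 2 * ∑ j ∈ Finset.range (M + N), ‖x j‖ ^ 2) := by
        rw [← Finset.mul_sum]; ring
    _ ≤ N * (‖X‖ * ‖x‖) ^ 2 := by
        rw [mul_pow]
        gcongr
        exact ell_sum_sq_le x _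

lemma tendsto_of_dense_aux {E : Type*} [NormedAddCommGroup E] [InnerProductSpace ℂ E]
    (u : ℕ → E) (v : E) (C : ℝ) (hu : ∀ᶠ N in atTop, ‖u N‖ ≤ C)
    (S : Submodule ℂ E) (hS : Dense (S : Set E))
    (h : ∀ y ∈ S, Tendsto (fun N => inner ℂ y (u N)) atTop (𝓝 (inner ℂ y v))) (y : E) :
    Tendsto (fun N => inner ℂ y (u N)) atTop (𝓝 (inner ℂ y v)) := by
  rw [Metric.tendsto_nhds]
  intro ε hε
  have hK : 0 < |C| + ‖v‖ + 1 := by positivity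
  obtain ⟨w, hw, hwy⟩ := hS.exists_dist_lt y (ε := ε / 2 / (|C| + ‖v‖ + 1)) (by positivity)
  filter_upwards [hu, (Metric.tendsto_nhds.1 (h w hw)) (ε / 2) (by positivity)] with N h1 h2
  rw [dist_eq_norm, ← inner_sub_right] at h2 ⊢
  have e : inner ℂ y (u N - v) = inner ℂ (y - w) (u N - v) + inner ℂ w (u N - v) := by
    rw [← inner_add_left, sub_add_cancel]
  rw [e]
  rw [dist_eq_norm] at hwy
  have h3 : ‖u N - v‖ ≤ |C| + ‖v‖ + 1 := by
    have := norm_sub_le (u N) v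
    have := le_abs_self C
    linarith
  have h4 : ‖inner ℂ (y - w) (u N - v)‖ ≤ ε / 2 := by
    refine (norm_inner_le_norm _ _).trans ?_
    calc ‖y - w‖ * ‖u N - v‖ ≤ ε / 2 / (|C| + ‖v‖ + 1) * (|C| + ‖v‖ + 1) := by gcongr
      _ = ε / 2 := by field_simp
  calc _ ≤ _ := norm_add_le _ _
    _ < ε := by linarith

lemma ell_dense : Dense ((Submodule.span ℂ {y : lp (fun _ : ℕ => 𝔏) 2 |
    ∃ n w, y = lp.single 2 n w} : Submodule ℂ (lp (fun _ : ℕ => 𝔏) 2)) : Set (lp (fun _ : ℕ => 𝔏) 2)) := by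
  intro y
  refine mem_closure_of_tendsto (lp.hasSum_single (by norm_num) y) (Eventually.of_forall ?_)
  intro s
  exact Submodule.sum_mem _ fun i _ => Submodule.subset_span ⟨i, _, rfl⟩

/-- Bounded sequences of operators converging entrywise converge weakly. -/
lemma weak_tendsto (G : ℕ → lp (fun _ : ℕ => 𝔏) 2 →L[ℂ] lp (fun _ : ℕ => 𝔏) 2)
    (X : lp (fun _ : ℕ => 𝔏) 2 →L[ℂ] lp (fun _ : ℕ => 𝔏) 2) (C : ℝ)
    (hG : ∀ N, 0 < N → ∀ x, ‖G N x‖ ≤ C * ‖x‖)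
    (h : ∀ j v n, Tendsto (fun N => G N (lp.single 2 j v) n) atTop (𝓝 (X (lp.single 2 j v) n)))
    (x y : lp (fun _ : ℕ => 𝔏) 2) :
    Tendsto (fun N => inner ℂ y (G N x)) atTop (𝓝 (inner ℂ y (X x))) := by
  have hb : ∀ x, ∀ᶠ N in atTop, ‖G N x‖ ≤ C * ‖x‖ := fun x => by
    filter_upwards [eventually_gt_atTop 0] with N hN using hG N hN x
  -- first: basis vectors `x`
  have h1 : ∀ j v y, Tendsto (fun N => inner ℂ y (G N (lp.single 2 j v))) atTop
      (𝓝 (inner ℂ y (X (lp.single 2 j v)))) := by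
    intro j v
    refine tendsto_of_dense_aux _ _ _ (hb _) _ ell_dense ?_
    intro y hy
    induction hy using Submodule.span_induction with
    | mem y hy =>
      obtain ⟨n, w, rfl⟩ := hy
      simp only [lp.inner_single_left]
      exact Tendsto.inner tendsto_const_nhds (h j v n)
    | zero => simp
    | add a b _ _ ha hb => simpa only [inner_add_left] using ha.add hb
    | smul c a _ ha => simpa only [inner_smul_left] using ha.const_mul _
  have h2 : ∀ x ∈ Submodule.span ℂ {y : lp (fun _ : ℕ => 𝔏) 2 | ∃ n w, y = lp.single 2 n w},
      Tendsto (fun N => inner ℂ y (G N x)) atTop (𝓝 (inner ℂ y (X x))) := by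
    intro x hx
    induction hx using Submodule.span_induction with
    | mem x hx =>
      obtain ⟨n, w, rfl⟩ := hx
      exact h1 n w y
    | zero => simp
    | add a b _ _ ha hb => simpa only [map_add, inner_add_right] using ha.add hb
    | smul c a _ ha => simpa only [map_smul, inner_smul_right] using ha.const_mul _
  rw [Metric.tendsto_nhds]
  intro ε hε
  have hK : 0 < (|C| + ‖X‖) * ‖y‖ + 1 := by positivity
  obtain ⟨w, hw, hwy⟩ := ell_dense.exists_dist_lt x
    (ε := ε / 2 / ((|C| + ‖X‖) * ‖y‖ + 1)) (by positivity)
  filter_upwards [hb (x - w), (Metric.tendsto_nhds.1 (h2 w hw)) (ε / 2) (by positivity)]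
    with N h3 h4
  rw [dist_eq_norm, ← inner_sub_right] at h4 ⊢
  rw [dist_eq_norm] at hwy
  have e : inner ℂ y (G N x - X x)
      = inner ℂ y (G N (x - w) - X (x - w)) + inner ℂ y (G N w - X w) := by
    rw [← inner_add_right]; congr 1; simp only [map_sub]; abel
  rw [e]
  have h5 : ‖G N (x - w) - X (x - w)‖ ≤ (|C| + ‖X‖) * ‖x - w‖ := by
    have a1 := norm_sub_le (G N (x - w)) (X (x - w))
    have a2 := X.le_opNorm (x - w)
    have a3 : C * ‖x - w‖ ≤ |C| * ‖x - w‖ := by gcongr; exact le_abs_self C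
    linarith
  have h6 : ‖inner ℂ y (G N (x - w) - X (x - w))‖ ≤ ε / 2 := by
    refine (norm_inner_le_norm _ _).trans ?_
    calc ‖y‖ * ‖G N (x - w) - X (x - w)‖ ≤ ‖y‖ * ((|C| + ‖X‖) * ‖x - w‖) := by gcongr
      _ = ((|C| + ‖X‖) * ‖y‖) * ‖x - w‖ := by ring
      _ ≤ ((|C| + ‖X‖) * ‖y‖ + 1) * (ε / 2 / ((|C| + ‖X‖) * ‖y‖ + 1)) := by
        gcongr
        linarith
      _ = ε / 2 := by field_simp
  calc _ ≤ _ := norm_add_le _ _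
    _ < ε := by linarith

end Helpers

section Main

open Filter Topology

variable {𝔏 : Type*} [NormedAddCommGroup 𝔏] [InnerProductSpace ℂ 𝔏]

/-- The generators satisfy the intertwining relation. -/
lemma generator_mem (A B : 𝔏 →L[ℂ] 𝔏) (hBA : B ∘L A = 1)
    (AS : lp (fun _ : ℕ => 𝔏) 2 →L[ℂ] lp (fun _ : ℕ => 𝔏) 2)
    (hAS : ∀ x : lp (fun _ : ℕ => 𝔏) 2,
      (AS x) 0 = 0 ∧ ∀ n : ℕ, (AS x) (n + 1) = A (x n))
    (l : ℂ) (hl : l ≠ 0) (X0 : lp (fun _ : ℕ => 𝔏) 2 →L[ℂ] lp (fun _ : ℕ => 𝔏) 2)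
    (m : ℕ) (L : 𝔏 →L[ℂ] 𝔏)
    (h : ∀ x : lp (fun _ : ℕ => 𝔏) 2,
      (∀ j : ℕ, j < m → (X0 x) j = 0) ∧
        ∀ k : ℕ, (X0 x) (k + m) = l ^ (-(k : ℤ)) • (A ^ k) (L ((B ^ k) (x k)))) :
    AS ∘L X0 = l • (X0 ∘L AS) := by
  refine ContinuousLinearMap.ext fun x => ?_
  apply lp.ext
  funext n
  change AS (X0 x) n = l • X0 (AS x) n
  have h0 : ∀ n, n ≤ m → X0 (AS x) n = 0 := by
    intro n hn
    rcases hn.lt_or_eq with h1 | h1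
    · exact (h _).1 n h1
    · subst h1
      have := (h (AS x)).2 0
      rw [zero_add] at this
      rw [this, (hAS x).1]
      simp
  cases n with
  | zero => rw [(hAS _).1, h0 0 (Nat.zero_le _), smul_zero]
  | succ n =>
    rw [(hAS _).2]
    by_cases hn : n < m
    · rw [(h x).1 n hn, h0 (n + 1) hn, map_zero, smul_zero]
    · obtain ⟨k, rfl⟩ : ∃ k, n = k + m := ⟨n - m, by omega⟩
      rw [(h x).2 k, show k + m + 1 = (k + 1) + m by ring, (h _).2 (k + 1), (hAS x).2 k, smul_smul,
        map_smul]
      have e1 : (B ^ (k + 1)) (A (x k)) = (B ^ k) (x k) := by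
        rw [pow_succ]
        change (B ^ k) ((B ∘L A) (x k)) = _
        rw [hBA]; rfl
      have e2 : l * l ^ (-((k + 1 : ℕ) : ℤ)) = l ^ (-(k : ℤ)) := by
        simp only [zpow_neg, zpow_natCast, pow_succ]
        field_simp
      rw [e1, e2, pow_succ']
      rfl

lemma ext_matrix (A B : 𝔏 →L[ℂ] 𝔏) (hAB : A ∘L B = 1)
    (AS : lp (fun _ : ℕ => 𝔏) 2 →L[ℂ] lp (fun _ : ℕ => 𝔏) 2)
    (hAS : ∀ x : lp (fun _ : ℕ => 𝔏) 2,
      (AS x) 0 = 0 ∧ ∀ n : ℕ, (AS x) (n + 1) = A (x n))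
    (l : ℂ) (hl : l ≠ 0) (X : lp (fun _ : ℕ => 𝔏) 2 →L[ℂ] lp (fun _ : ℕ => 𝔏) 2)
    (hX : AS ∘L X = l • (X ∘L AS)) (k : ℕ) (v : 𝔏) :
    (∀ n, n < k → X (lp.single 2 k v) n = 0) ∧
    ∀ m, X (lp.single 2 k v) (k + m)
      = l ^ (-(k : ℤ)) • (A ^ k) (X (lp.single 2 0 ((B ^ k) v)) m) := by
  have hs : ∀ k v, X (lp.single 2 (k + 1) v) = l⁻¹ • AS (X (lp.single 2 k (B v))) := by
    intro k v
    have e : (lp.single 2 (k + 1) v : lp (fun _ : ℕ => 𝔏) 2) = AS (lp.single 2 k (B v)) := by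
      apply lp.ext
      funext n
      cases n with
      | zero => rw [(hAS _).1, lp.single_apply_ne]; omega
      | succ n =>
        rw [(hAS _).2]
        by_cases h : n = k
        · subst h
          rw [lp.single_apply_self, lp.single_apply_self]
          exact (congrArg (fun T : 𝔏 →L[ℂ] 𝔏 => T v) hAB).symm
        · rw [lp.single_apply_ne _ _ _ h, lp.single_apply_ne _ _ _ (by omega), map_zero]
    have e2 : AS (X (lp.single 2 k (B v))) = l • X (AS (lp.single 2 k (B v))) :=
      congrArg (fun T : lp (fun _ : ℕ => 𝔏) 2 →L[ℂ] lp (fun _ : ℕ => 𝔏) 2 =>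
        T (lp.single 2 k (B v))) hX
    rw [e2, smul_smul, inv_mul_cancel₀ hl, one_smul, e]
  induction k generalizing v with
  | zero => simp
  | succ k ih =>
    refine ⟨?_, ?_⟩
    · intro n hn
      rw [hs]
      change l⁻¹ • (AS _) n = 0
      cases n with
      | zero => rw [(hAS _).1, smul_zero]
      | succ n => rw [(hAS _).2, (ih _).1 n (by omega), map_zero, smul_zero]
    · intro m
      rw [hs]
      change l⁻¹ • (AS _) (k + 1 + m) = _
      rw [show k + 1 + m = k + m + 1 by ring, (hAS _).2, (ih _).2 m, map_smul, smul_smul,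
        pow_succ', pow_succ]
      have e2 : l⁻¹ * l ^ (-(k : ℤ)) = l ^ (-((k + 1 : ℕ) : ℤ)) := by
        simp only [zpow_neg, zpow_natCast, pow_succ]
        field_simp
      rw [e2]
      rfl

lemma pow_inv_aux (A B : 𝔏 →L[ℂ] 𝔏) (hBA : B ∘L A = 1) (k : ℕ) (x : 𝔏) :
    (B ^ k) ((A ^ k) x) = x := by
  induction k generalizing x with
  | zero => simp
  | succ k ih =>
    rw [pow_succ, pow_succ']
    change (B ^ k) ((B ∘L A) ((A ^ k) x)) = x
    rw [hBA]
    exact ih x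

end Main


open ContinuousLinearMap

theorem extended_eigenspace_eq_weakStar_closure_span
    {𝔏 : Type*} [NormedAddCommGroup 𝔏] [InnerProductSpace ℂ 𝔏] [CompleteSpace 𝔏]
    (A : 𝔏 →L[ℂ] 𝔏) (hApos : A.IsPositive)
    (B : 𝔏 →L[ℂ] 𝔏) (hAB : A ∘L B = 1) (hBA : B ∘L A = 1)
    (AS : lp (fun _ : ℕ => 𝔏) 2 →L[ℂ] lp (fun _ : ℕ => 𝔏) 2)
    (hAS : ∀ x : lp (fun _ : ℕ => 𝔏) 2,
      (AS x) 0 = 0 ∧ ∀ n : ℕ, (AS x) (n + 1) = A (x n))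
    (l : ℂ) (hl : l ∈ extSpectrum AS) :
    {X : lp (fun _ : ℕ => 𝔏) 2 →L[ℂ] lp (fun _ : ℕ => 𝔏) 2 | AS ∘L X = l • (X ∘L AS)} =
      ⇑(ContinuousLinearMapWOT.linearEquiv (σ := RingHom.id ℂ) (E := lp (fun _ : ℕ => 𝔏) 2) (F := lp (fun _ : ℕ => 𝔏) 2) ℂ).symm ⁻¹'
        closure (⇑(ContinuousLinearMapWOT.linearEquiv (σ := RingHom.id ℂ) (E := lp (fun _ : ℕ => 𝔏) 2) (F := lp (fun _ : ℕ => 𝔏) 2) ℂ).symm ''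
          (Submodule.span ℂ
            {X0 : lp (fun _ : ℕ => 𝔏) 2 →L[ℂ] lp (fun _ : ℕ => 𝔏) 2 |
              ∃ (m : ℕ) (L : 𝔏 →L[ℂ] 𝔏), L ∈ calA ‖l‖ A A ∧
                ∀ x : lp (fun _ : ℕ => 𝔏) 2,
                  (∀ j : ℕ, j < m → (X0 x) j = 0) ∧
                  ∀ k : ℕ, (X0 x) (k + m) =
                    l ^ (-(k : ℤ)) • (A ^ k) (L ((B ^ k) (x k)))} : Set _)) := by
  classical
  have hl0 : l ≠ 0 := by
    rintro rfl
    obtain ⟨X, hX0, hX⟩ := hl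
    apply hX0
    refine ContinuousLinearMap.ext fun x => ?_
    apply lp.ext
    funext n
    have h1 : AS (X x) = 0 := by
      have := congrArg (fun T : lp (fun _ : ℕ => 𝔏) 2 →L[ℂ] lp (fun _ : ℕ => 𝔏) 2 => T x) hX
      simpa using this
    have h2 := (hAS (X x)).2 n
    rw [h1] at h2
    have h3 : B (A (X x n)) = X x n :=
      congrArg (fun T : 𝔏 →L[ℂ] 𝔏 => T (X x n)) hBA
    rw [← h2] at h3
    rw [← h3]
    simp
  apply Set.Subset.antisymm
  · intro X hX
    have hX : AS ∘L X = l • (X ∘L AS) := hX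
    have hM := ext_matrix A B hAB AS hAS l hl0 X hX
    choose D hD using exists_diag X
    let G : ℕ → lp (fun _ : ℕ => 𝔏) 2 →L[ℂ] lp (fun _ : ℕ => 𝔏) 2 := fun N =>
      ∑ m ∈ Finset.range N, (((N - m : ℕ) : ℂ) / N) • D m
    have hGa : ∀ N x n, G N x n = ∑ m ∈ Finset.range N, (((N - m : ℕ) : ℂ) / N) •
        (if m ≤ n then X (lp.single 2 (n - m) (x (n - m))) n else 0) := by
      intro N x n
      simp only [G, ContinuousLinearMap.sum_apply, lp.coeFn_sum, Finset.sum_apply,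
        ContinuousLinearMap.smul_apply, lp.coeFn_smul, Pi.smul_apply, hD]
    have hGb : ∀ N, 0 < N → ∀ x, ‖G N x‖ ≤ ‖X‖ * ‖x‖ := by
      intro N hN x
      refine fejer_bound X (fun j n v h => (hM j v).1 n h) N hN x _ fun n => ?_
      rw [hGa, Finset.smul_sum]
      refine Finset.sum_congr rfl fun m _ => ?_
      rw [smul_smul, mul_div_cancel₀ _ (by exact_mod_cast hN.ne'), Nat.cast_smul_eq_nsmul]
    have hGc : ∀ j v n, Filter.Tendsto (fun N => G N (lp.single 2 j v) n) Filter.atTop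
        (nhds (X (lp.single 2 j v) n)) := by
      intro j v n
      by_cases hjn : n < j
      · rw [(hM j v).1 n hjn]
        refine tendsto_const_nhds.congr fun N => ?_
        rw [hGa, Finset.sum_eq_zero]
        intro m _
        by_cases h : m ≤ n
        · rw [if_pos h, lp.single_apply_ne _ _ _ (by omega)]
          simp
        · rw [if_neg h, smul_zero]
      · have e : ∀ᶠ N : ℕ in Filter.atTop, (1 - ((n - j : ℕ) : ℂ) / N) • X (lp.single 2 j v) n
            = G N (lp.single 2 j v) n := by
          filter_upwards [Filter.eventually_gt_atTop n] with N hN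
          rw [hGa, Finset.sum_eq_single (n - j)]
          · rw [if_pos (by omega), show n - (n - j) = j by omega, lp.single_apply_self]
            congr 1
            rw [Nat.cast_sub (show n - j ≤ N by omega), sub_div, div_self]
            have : N ≠ 0 := by omega
            exact_mod_cast this
          · intro m _ hm
            by_cases h : m ≤ n
            · rw [if_pos h, lp.single_apply_ne _ _ _ (by omega)]
              simp
            · rw [if_neg h, smul_zero]
          · intro h
            simp at h
            omega
        refine Filter.Tendsto.congr' e ?_
        have t1 : Filter.Tendsto (fun N : ℕ => (1 - ((n - j : ℕ) : ℂ) / N)) Filter.atTop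
            (nhds (1 - 0)) :=
          tendsto_const_nhds.sub (tendsto_const_div_atTop_nhds_zero_nat _)
        have t2 := t1.smul_const (X (lp.single 2 j v) n)
        simpa using t2
    have hT : Filter.Tendsto (fun N => (ContinuousLinearMapWOT.linearEquiv (σ := RingHom.id ℂ)
        (E := lp (fun _ : ℕ => 𝔏) 2) (F := lp (fun _ : ℕ => 𝔏) 2) ℂ).symm (G N)) Filter.atTop
        (nhds ((ContinuousLinearMapWOT.linearEquiv (σ := RingHom.id ℂ)
        (E := lp (fun _ : ℕ => 𝔏) 2) (F := lp (fun _ : ℕ => 𝔏) 2) ℂ).symm X)) := by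
      rw [ContinuousLinearMapWOT.tendsto_iff_forall_inner_apply_tendsto]
      exact fun x y => weak_tendsto G X ‖X‖ hGb hGc x y
    refine mem_closure_of_tendsto hT (Filter.Eventually.of_forall fun N => ?_)
    refine ⟨G N, ?_, rfl⟩
    refine Submodule.sum_mem _ fun m _ => Submodule.smul_mem _ _ (Submodule.subset_span ?_)
    refine ⟨m, (lp.evalCLM ℂ (fun _ : ℕ => 𝔏) 2 m) ∘L X ∘L
      (lp.singleContinuousLinearMap ℂ (fun _ : ℕ => 𝔏) 2 0), ?_, ?_⟩
    · refine ⟨‖X‖, norm_nonneg _, fun n x => ?_⟩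
      change ‖(A ^ n) (X (lp.single 2 0 x) m)‖ ≤ _
      have h1 := (hM n ((A ^ n) x)).2 m
      rw [pow_inv_aux A B hBA] at h1
      have h2 := ell_norm_entry_le X n (n + m) ((A ^ n) x)
      rw [h1, norm_smul, zpow_neg, zpow_natCast, norm_inv, norm_pow] at h2
      have hp : 0 < ‖l‖ ^ n := by positivity
      rw [inv_mul_le_iff₀ hp] at h2
      calc _ ≤ _ := h2
        _ = _ := by ring
    · intro x
      refine ⟨fun j hj => ?_, fun k => ?_⟩
      · rw [hD, if_neg (by omega)]
      · rw [hD, if_pos (by omega), Nat.add_sub_cancel, (hM k (x k)).2 m]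
        rfl
  · intro X hX
    let V : Submodule ℂ (lp (fun _ : ℕ => 𝔏) 2 →L[ℂ] lp (fun _ : ℕ => 𝔏) 2) :=
      { carrier := {X | AS ∘L X = l • (X ∘L AS)}
        zero_mem' := by simp
        add_mem' := by
          intro a b ha hb
          simp only [Set.mem_ofPred_eq] at *
          rw [ContinuousLinearMap.comp_add, ContinuousLinearMap.add_comp, ha, hb, smul_add]
        smul_mem' := by
          intro c a ha
          simp only [Set.mem_ofPred_eq] at *
          rw [ContinuousLinearMap.comp_smul, ContinuousLinearMap.smul_comp, ha, smul_comm] }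
    let W : Set (ContinuousLinearMapWOT (RingHom.id ℂ) (lp (fun _ : ℕ => 𝔏) 2)
        (lp (fun _ : ℕ => 𝔏) 2)) :=
      {Y | ∀ (x : lp (fun _ : ℕ => 𝔏) 2) (f : StrongDual ℂ (lp (fun _ : ℕ => 𝔏) 2)),
        (f ∘L AS) (Y x) = l * f (Y (AS x))}
    have hW : IsClosed W := by
      simp only [W, Set.ofPred_forall]
      refine isClosed_iInter fun x => isClosed_iInter fun f => ?_
      exact isClosed_eq (ContinuousLinearMapWOT.continuous_dual_apply x (f ∘L AS))
        (continuous_const.mul (ContinuousLinearMapWOT.continuous_dual_apply (AS x) f))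
    have hXW : (ContinuousLinearMapWOT.linearEquiv (σ := RingHom.id ℂ)
        (E := lp (fun _ : ℕ => 𝔏) 2) (F := lp (fun _ : ℕ => 𝔏) 2) ℂ).symm X ∈ W := by
      refine closure_minimal ?_ hW hX
      rintro _ ⟨Y, hY, rfl⟩
      have hYV : Y ∈ V := by
        refine (Submodule.span_le (p := V)).2 ?_ hY
        rintro X0 ⟨m, L, -, h⟩
        exact generator_mem A B hBA AS hAS l hl0 X0 m L h
      intro x f
      have hYV : AS ∘L Y = l • (Y ∘L AS) := hYV
      have h1 : AS (Y x) = l • Y (AS x) :=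
        congrArg (fun T : lp (fun _ : ℕ => 𝔏) 2 →L[ℂ] lp (fun _ : ℕ => 𝔏) 2 => T x) hYV
      change f (AS (Y x)) = l * f (Y (AS x))
      rw [h1, map_smul, smul_eq_mul]
    change AS ∘L X = l • (X ∘L AS)
    refine ContinuousLinearMap.ext fun x => ?_
    refine (SeparatingDual.eq_iff_forall_dual_eq (R := ℂ)).2 fun f => ?_
    have h1 : f (AS (X x)) = l * f (X (AS x)) := hXW x f
    change f (AS (X x)) = f (l • X (AS x))
    rw [h1, map_smul, smul_eq_mul]
end

section
/- Let α > β > γ > 0 be real numbers and λ ∈ ℂ with α/β = β/γ = |λ|. Let A be the positive operator on ℂ³ given by the diagonal matrix diag(α,β,γ), let L₁ be the operator on ℂ³ whose matrix has a 1 in entry (1,2) and 0 elsewhere, and let L₂ be the operator whose matrix has a 1 in entry (2,3) and 0 elsewhere. Then L₁ ∈ 𝒜_{|λ|}(A) and L₂ ∈ 𝒜_{|λ|}(A), but L₁∘L₂ ∉ 𝒜_{|λ|}(A); in particular, for |λ| > 1 the set 𝒜_{|λ|}(A) need not be closed under multiplication. -/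
open ContinuousLinearMap

theorem aux_pow_apply (d : Fin 3 → ℝ)
    (A : EuclideanSpace ℂ (Fin 3) →L[ℂ] EuclideanSpace ℂ (Fin 3))
    (hA : ∀ (x : EuclideanSpace ℂ (Fin 3)) (i : Fin 3), A x i = ((d i : ℝ) : ℂ) * x i)
    (n : ℕ) (x : EuclideanSpace ℂ (Fin 3)) (i : Fin 3) :
    (A ^ n) x i = ((d i : ℝ) : ℂ) ^ n * x i := by
  induction n generalizing x with
  | zero => simp
  | succ k ih =>
    rw [pow_succ]
    change (A ^ k) (A x) i = _
    rw [ih, hA]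
    ring

theorem aux_norm_le (y : EuclideanSpace ℂ (Fin 3)) :
    ‖y‖ ≤ ‖y 0‖ + ‖y 1‖ + ‖y 2‖ := by
  rw [EuclideanSpace.norm_eq, Fin.sum_univ_three]
  apply Real.sqrt_le_iff.mpr
  have h0 := norm_nonneg (y 0)
  have h1 := norm_nonneg (y 1)
  have h2 := norm_nonneg (y 2)
  refine ⟨by positivity, ?_⟩
  nlinarith [mul_nonneg h0 h1, mul_nonneg h0 h2, mul_nonneg h1 h2]

theorem calA_not_closed_under_mul
    (α β γ : ℝ) (hαβ : β < α) (hβγ : γ < β) (hγ : 0 < γ)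
    (l : ℂ) (h1 : α / β = ‖l‖) (h2 : β / γ = ‖l‖)
    (A : EuclideanSpace ℂ (Fin 3) →L[ℂ] EuclideanSpace ℂ (Fin 3))
    (hA : ∀ (x : EuclideanSpace ℂ (Fin 3)) (i : Fin 3), A x i = ((![α, β, γ] i : ℝ) : ℂ) * x i)
    (L₁ : EuclideanSpace ℂ (Fin 3) →L[ℂ] EuclideanSpace ℂ (Fin 3))
    (hL₁ : ∀ x : EuclideanSpace ℂ (Fin 3), L₁ x 0 = x 1 ∧ L₁ x 1 = 0 ∧ L₁ x 2 = 0)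
    (L₂ : EuclideanSpace ℂ (Fin 3) →L[ℂ] EuclideanSpace ℂ (Fin 3))
    (hL₂ : ∀ x : EuclideanSpace ℂ (Fin 3), L₂ x 0 = 0 ∧ L₂ x 1 = x 2 ∧ L₂ x 2 = 0) :
    L₁ ∈ calA ‖l‖ A A ∧ L₂ ∈ calA ‖l‖ A A ∧
      L₁ ∘L L₂ ∉ calA ‖l‖ A A := by
  have hβ : 0 < β := hγ.trans hβγ
  have hα : 0 < α := hβ.trans hαβ
  have hr : 1 < ‖l‖ := by rw [← h2]; exact (one_lt_div hγ).mpr hβγ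
  have e1 : α = ‖l‖ * β := (div_eq_iff hβ.ne').mp h1
  have e2 : β = ‖l‖ * γ := (div_eq_iff hγ.ne').mp h2
  have key := aux_pow_apply ![α, β, γ] A hA
  generalize ‖l‖ = r at *
  refine ⟨⟨1, zero_le_one, fun n x => ?_⟩, ⟨1, zero_le_one, fun n x => ?_⟩, ?_⟩
  · obtain ⟨a, b, c⟩ := hL₁ x
    have h := aux_norm_le ((A ^ n) (L₁ x))
    have h' := PiLp.norm_apply_le ((A ^ n) x) 1
    simp only [key, a, b, c] at h h'
    generalize A ^ n = B at h h' ⊢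
    simp [abs_of_pos hα, abs_of_pos hβ] at h h'
    rw [e1, mul_pow, mul_assoc] at h
    rw [one_mul]
    exact h.trans (mul_le_mul_of_nonneg_left h' (by positivity))
  · obtain ⟨a, b, c⟩ := hL₂ x
    have h := aux_norm_le ((A ^ n) (L₂ x))
    have h' := PiLp.norm_apply_le ((A ^ n) x) 2
    simp only [key, a, b, c] at h h'
    generalize A ^ n = B at h h' ⊢
    simp [abs_of_pos hγ, abs_of_pos hβ] at h h'
    rw [e2, mul_pow, mul_assoc] at h
    rw [one_mul]
    exact h.trans (mul_le_mul_of_nonneg_left h' (by positivity))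
  · rintro ⟨c, hc, H⟩
    obtain ⟨n, hn⟩ := pow_unbounded_of_one_lt c hr
    have h := H n (EuclideanSpace.single 2 1)
    have h' := PiLp.norm_apply_le ((A ^ n) ((L₁ ∘L L₂) (EuclideanSpace.single 2 1))) 0
    have h'' := aux_norm_le ((A ^ n) (EuclideanSpace.single 2 1))
    simp only [key, ContinuousLinearMap.comp_apply, (hL₁ _).1, (hL₂ _).2.1] at h' h''
    generalize A ^ n = B at h h' h''
    simp [abs_of_pos hα, abs_of_pos hγ] at h' h''
    have hrn : 0 < r ^ n := by positivity
    have hgn : 0 < γ ^ n := by positivity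
    have h3 : α ^ n ≤ c * r ^ n * γ ^ n :=
      (h'.trans h).trans (mul_le_mul_of_nonneg_left h'' (by positivity))
    rw [e1, e2, mul_pow, mul_pow] at h3
    nlinarith [mul_pos hrn hgn]
end
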